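/- Lemma 2.4(iii): Let v be a classical solution of v_t = v_rr + ((m−1)/r) v_r − (b(r,t)/r²) v on [0,R] × (t1,t2), not identically zero, satisfying the boundary condition (1.5). Then for any t0 ∈ (t1,t2) there exists ε0 > 0 such that the zero number Z(v(·,t)) is constant as t varies in the interval (t0 − ε0, t0). -/

import Mathlib

open Set Filter

theorem zn_second (f : ℝ → ℝ) (x : ℝ) (h : IsLocalMax f x) (hf : ContDiffAt ℝ 2 f x) :
    deriv f x = 0 ∧ deriv (deriv f) x ≤ 0 := by
  refine ⟨h.deriv_eq_zero, ?_⟩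
  by_contra hc
  push Not at hc
  have hmin := isLocalMin_of_deriv_deriv_pos hc h.deriv_eq_zero hf.continuousAt
  have heq : f =ᶠ[nhds x] fun _ => f x := by
    filter_upwards [h, hmin] with y h1 h2
    exact le_antisymm h1 h2
  have h2 := heq.deriv.deriv_eq
  simp at h2
  linarith

def ZNChain (u : ℕ → ℝ → ℝ → ℝ) (K : ℕ) (α β t : ℝ) (x : ℕ → ℝ) : Prop :=
  (∀ j < K, x j ∈ Icc α β ∧ 0 < u j (x j) t) ∧ ∀ j, j + 1 < K → x j < x (j + 1)

theorem zn_chain_le (K : ℕ) (x : ℕ → ℝ) (h : ∀ j, j + 1 < K → x j ≤ x (j + 1)) :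
    ∀ j i, i ≤ j → j < K → x i ≤ x j := by
  intro j
  induction j with
  | zero => intro i hi _; simp at hi; simp [hi]
  | succ j ih =>
    intro i hi hj
    rcases Nat.lt_or_ge i (j+1) with h1 | h1
    · exact (ih i (by omega) (by omega)).trans (h j hj)
    · have : i = j + 1 := by omega
      rw [this]

theorem zn_chain_lt (K : ℕ) (x : ℕ → ℝ) (h : ∀ j, j + 1 < K → x j < x (j + 1)) :
    ∀ j i, i < j → j < K → x i < x j := by
  intro j i hi hj
  obtain ⟨k, rfl⟩ : ∃ k, j = k + 1 := ⟨j - 1, by omega⟩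
  exact (zn_chain_le K x (fun j hj => (h j hj).le) k i (by omega) (by omega)).trans_lt (h k hj)

theorem zn_kp (K : ℕ) (u : ℕ → ℝ → ℝ → ℝ) (α β T0 T1 C : ℝ) (hT : T0 ≤ T1)
    (hcont : ∀ i < K, ContinuousOn (fun p : ℝ × ℝ => u i p.1 p.2) (Icc α β ×ˢ Icc T0 T1))
    (hH : ∀ i < K, ∀ x ∈ Ioo α β, ∀ t ∈ Ioc T0 T1, 0 < u i x t →
      IsLocalMax (fun y => u i y t) x →
      ∃ d, HasDerivAt (fun s => u i x s) d t ∧ d ≤ C * u i x t)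
    (hadj : ∀ i, i + 1 < K → ∀ x ∈ Icc α β, ∀ t ∈ Icc T0 T1,
      0 < u i x t → 0 < u (i + 1) x t → False)
    (hα : 0 < K → ∀ t ∈ Icc T0 T1, u 0 α t ≤ 0)
    (hβ : 0 < K → ∀ t ∈ Icc T0 T1, u (K - 1) β t ≤ 0)
    (hx : ∃ x, ZNChain u K α β T1 x) : ∃ y, ZNChain u K α β T0 y := by
  obtain ⟨x0, hx0⟩ := hx
  rcases Nat.eq_zero_or_pos K with rfl | hK
  · exact ⟨x0, by simp [ZNChain]⟩
  by_contra hcon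
  set l : ℝ := K * C + 1 with hl
  set S : Set ((ℕ → ℝ) × ℝ) := {p | (∀ j, p.1 j ∈ Icc α β) ∧
    (∀ j, j + 1 < K → p.1 j ≤ p.1 (j + 1)) ∧ p.2 ∈ Icc T0 T1} with hS
  have hScomp : IsCompact S := by
    have h1 : IsCompact ((Set.pi univ (fun _ : ℕ => Icc α β)) ×ˢ Icc T0 T1) :=
      (isCompact_univ_pi (fun _ => isCompact_Icc)).prod isCompact_Icc
    have h2 : S = ((Set.pi univ (fun _ : ℕ => Icc α β)) ×ˢ Icc T0 T1) ∩
        {p | ∀ j, j + 1 < K → p.1 j ≤ p.1 (j + 1)} := by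
      ext p
      simp only [hS, mem_ofPred_eq, mem_inter_iff, mem_prod, mem_univ_pi]
      tauto
    rw [h2]
    apply h1.inter_right
    simp only [ofPred_forall]
    refine isClosed_iInter fun j => isClosed_iInter fun _ => ?_
    exact isClosed_le (by fun_prop) (by fun_prop)
  set Φ : (ℕ → ℝ) × ℝ → ℝ := fun p =>
    Real.exp (-l * p.2) * ∏ j ∈ Finset.range K, max (u j (p.1 j) p.2) 0 with hΦ
  have hΦc : ContinuousOn Φ S := by
    apply ContinuousOn.mul (by fun_prop)
    apply continuousOn_finsetProd
    intro j hj
    have hj' : j < K := Finset.mem_range.1 hj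
    apply ContinuousOn.sup _ continuousOn_const
    have := (hcont j hj').comp (f := fun p : (ℕ → ℝ) × ℝ => (p.1 j, p.2)) (s := S)
      (by fun_prop) (by
        intro p hp
        exact ⟨hp.1 j, hp.2.2⟩)
    exact this
  -- starting point
  set x1 : ℕ → ℝ := fun j => if j < K then x0 j else x0 0 with hx1
  have hx1S : (x1, T1) ∈ S := by
    refine ⟨?_, ?_, ⟨hT, le_rfl⟩⟩
    · intro j
      by_cases hj : j < K
      · simp only [hx1, hj, if_true]; exact (hx0.1 j hj).1
      · simp only [hx1, hj, if_false]; exact (hx0.1 0 hK).1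
    · intro j hj
      have hj' : j < K := by omega
      simp only [hx1, hj, hj', if_true]; exact (hx0.2 j hj).le
  have hpos1 : 0 < Φ (x1, T1) := by
    apply mul_pos (Real.exp_pos _)
    apply Finset.prod_pos
    intro j hj
    have hj' : j < K := Finset.mem_range.1 hj
    simp only [hx1, hj', if_true]
    exact lt_max_of_lt_left (hx0.1 j hj').2
  obtain ⟨⟨x, t⟩, hxS, hmax⟩ := hScomp.exists_isMaxOn ⟨_, hx1S⟩ hΦc
  have hpos : 0 < Φ (x, t) := hpos1.trans_le (hmax hx1S)
  have hprod : 0 < ∏ j ∈ Finset.range K, max (u j (x j) t) 0 :=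
    (mul_pos_iff_of_pos_left (Real.exp_pos _)).1 hpos
  have hup : ∀ j < K, 0 < u j (x j) t := by
    intro j hj
    by_contra hc
    push Not at hc
    have : ∏ j ∈ Finset.range K, max (u j (x j) t) 0 = 0 :=
      Finset.prod_eq_zero (Finset.mem_range.2 hj) (max_eq_right hc)
    linarith
  obtain ⟨hxI, hxm, htI⟩ := hxS
  simp only at hxI hxm htI
  have hxs : ∀ j, j + 1 < K → x j < x (j + 1) := by
    intro j hj
    rcases (hxm j hj).lt_or_eq with h | h
    · exact h
    · exfalso
      have h1 := hup (j + 1) hj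
      rw [← h] at h1
      exact hadj j hj (x j) (hxI j) t htI (hup j (by omega)) h1
  have hlo : ∀ j < K, α < x j := by
    intro j hj
    have h0 : α < x 0 := by
      rcases (hxI 0).1.lt_or_eq with h | h
      · exact h
      · exfalso
        have := hα hK t htI
        rw [h] at this
        linarith [hup 0 hK]
    exact h0.trans_le (zn_chain_le K x hxm j 0 (by omega) hj)
  have hhi : ∀ j < K, x j < β := by
    intro j hj
    have h0 : x (K - 1) < β := by
      rcases (hxI (K - 1)).2.lt_or_eq with h | h
      · exact h
      · exfalso
        have := hβ hK t htI
        rw [← h] at this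
        linarith [hup (K - 1) (by omega)]
    exact (zn_chain_le K x hxm (K - 1) j (by omega) (by omega)).trans_lt h0
  have htpos : T0 < t := by
    rcases htI.1.lt_or_eq with h | h
    · exact h
    · exfalso
      apply hcon
      subst h
      exact ⟨x, fun j hj => ⟨hxI j, hup j hj⟩, hxs⟩
  -- local maxima
  have hloc : ∀ i < K, IsLocalMax (fun y => u i y t) (x i) := by
    intro i hi
    have e1 : ∀ᶠ y in nhds (x i), y ∈ Ioo α β := Ioo_mem_nhds (hlo i hi) (hhi i hi)
    have e2 : ∀ᶠ y in nhds (x i), i + 1 < K → y < x (i + 1) := by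
      by_cases h : i + 1 < K
      · filter_upwards [Iio_mem_nhds (hxs i h)] with y hy _ using hy
      · exact Eventually.of_forall fun y h' => absurd h' h
    have e3 : ∀ᶠ y in nhds (x i), 0 < i → x (i - 1) < y := by
      by_cases h : 0 < i
      · have h' := hxs (i - 1) (by omega)
        rw [show i - 1 + 1 = i by omega] at h'
        filter_upwards [Ioi_mem_nhds h'] with y hy _ using hy
      · exact Eventually.of_forall fun y h' => absurd h' h
    filter_upwards [e1, e2, e3] with y h1 h2 h3
    have hmem : (Function.update x i y, t) ∈ S := by
      refine ⟨?_, ?_, htI⟩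
      · intro j
        by_cases hj : j = i
        · subst hj; simp only [Function.update_self]; exact ⟨h1.1.le, h1.2.le⟩
        · simp only [Function.update_of_ne hj]; exact hxI j
      · intro j hj
        by_cases hji : j = i
        · subst hji
          simp only [Function.update_self]
          rw [Function.update_of_ne (by omega)]
          exact (h2 hj).le
        · by_cases hji' : j + 1 = i
          · subst hji'
            simp only [Function.update_self]
            rw [Function.update_of_ne (by omega)]
            have := h3 (by omega)
            simpa using this.le
          · simp only [Function.update_of_ne hji, Function.update_of_ne hji']
            exact hxm j hj
    have hle := hmax hmem
    simp only [mem_ofPred_eq, hΦ] at hle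
    have hle2 := le_of_mul_le_mul_left hle (Real.exp_pos _)
    have him : i ∈ Finset.range K := Finset.mem_range.2 hi
    rw [← Finset.mul_prod_erase _ _ him, ← Finset.mul_prod_erase _ _ him] at hle2
    have hsame : ∏ j ∈ (Finset.range K).erase i, max (u j (Function.update x i y j) t) 0
        = ∏ j ∈ (Finset.range K).erase i, max (u j (x j) t) 0 := by
      apply Finset.prod_congr rfl
      intro j hj
      rw [Function.update_of_ne (Finset.ne_of_mem_erase hj)]
    rw [hsame] at hle2
    have hpp : 0 < ∏ j ∈ (Finset.range K).erase i, max (u j (x j) t) 0 := by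
      apply Finset.prod_pos
      intro j hj
      exact lt_max_of_lt_left (hup j (Finset.mem_range.1 (Finset.mem_of_mem_erase hj)))
    have hle3 := le_of_mul_le_mul_right hle2 hpp
    simp only [Function.update_self] at hle3
    rw [max_eq_left (hup i hi).le] at hle3
    exact (le_max_left _ _).trans hle3
  have hd : ∀ i, ∃ d, i < K → HasDerivAt (fun s => u i (x i) s) d t ∧ d ≤ C * u i (x i) t := by
    intro i
    by_cases hi : i < K
    · obtain ⟨d, h⟩ := hH i hi (x i) ⟨hlo i hi, hhi i hi⟩ t ⟨htpos, htI.2⟩ (hup i hi) (hloc i hi)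
      exact ⟨d, fun _ => h⟩
    · exact ⟨0, fun h => absurd h hi⟩
  choose d hd using hd
  have hder1 : HasDerivAt (fun s => ∏ j ∈ Finset.range K, u j (x j) s)
      (∑ i ∈ Finset.range K, (∏ j ∈ (Finset.range K).erase i, u j (x j) t) • d i) t := by
    have := HasDerivAt.fun_finsetProd (u := Finset.range K) (f := fun j s => u j (x j) s)
      (f' := d) (x := t) (fun i hi => (hd i (Finset.mem_range.1 hi)).1)
    exact this
  have hder2 : HasDerivAt (fun s => Real.exp (-l * s)) (Real.exp (-l * t) * (-l)) t := by
    have := ((hasDerivAt_id t).const_mul (-l)).exp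
    simpa using this
  have hder := hder2.mul hder1
  set P := ∏ j ∈ Finset.range K, u j (x j) t with hP
  have hPpos : 0 < P := Finset.prod_pos fun j hj => hup j (Finset.mem_range.1 hj)
  have hsum : (∑ i ∈ Finset.range K, (∏ j ∈ (Finset.range K).erase i, u j (x j) t) • d i)
      ≤ K * C * P := by
    have : ∀ i ∈ Finset.range K,
        (∏ j ∈ (Finset.range K).erase i, u j (x j) t) • d i ≤ C * P := by
      intro i hi
      have hpp : 0 < ∏ j ∈ (Finset.range K).erase i, u j (x j) t := by
        apply Finset.prod_pos
        intro j hj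
        exact (hup j (Finset.mem_range.1 (Finset.mem_of_mem_erase hj)))
      have h1 := mul_le_mul_of_nonneg_left (hd i (Finset.mem_range.1 hi)).2 hpp.le
      rw [hP, ← Finset.mul_prod_erase _ _ hi, smul_eq_mul]
      linarith
    refine (Finset.sum_le_card_nsmul _ _ _ this).trans ?_
    simp [nsmul_eq_mul, mul_assoc]
  have hneg : Real.exp (-l * t) * (-l) * P + Real.exp (-l * t) *
      (∑ i ∈ Finset.range K, (∏ j ∈ (Finset.range K).erase i, u j (x j) t) • d i) < 0 := by
    have he := Real.exp_pos (-l * t)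
    have : -l * P + (∑ i ∈ Finset.range K, (∏ j ∈ (Finset.range K).erase i, u j (x j) t) • d i)
        < 0 := by
      rw [hl]; nlinarith
    nlinarith
  -- contradiction
  have hev : ∀ᶠ s in nhdsWithin t (Iio t),
      Real.exp (-l * s) * ∏ j ∈ Finset.range K, u j (x j) s ≤
      Real.exp (-l * t) * ∏ j ∈ Finset.range K, u j (x j) t := by
    have e1 : ∀ᶠ s in nhdsWithin t (Iio t), T0 < s :=
      nhdsWithin_le_nhds (Ioi_mem_nhds htpos)
    have e2 : ∀ᶠ s in nhds t, ∀ j ∈ Finset.range K, 0 < u j (x j) s := by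
      rw [Finset.eventually_all]
      intro j hj
      have hj' := Finset.mem_range.1 hj
      exact (hd j hj').1.continuousAt.eventually (Ioi_mem_nhds (hup j hj'))
    filter_upwards [e1, nhdsWithin_le_nhds e2, self_mem_nhdsWithin] with s h1 h2 h3
    have hmem : (x, s) ∈ S := ⟨hxI, hxm, ⟨h1.le, (le_of_lt h3).trans htI.2⟩⟩
    have h4 := hmax hmem
    simp only [mem_ofPred_eq, hΦ] at h4
    have c1 : ∏ j ∈ Finset.range K, max (u j (x j) s) 0 = ∏ j ∈ Finset.range K, u j (x j) s :=
      Finset.prod_congr rfl fun j hj => max_eq_left (h2 j hj).le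
    have c2 : ∏ j ∈ Finset.range K, max (u j (x j) t) 0 = ∏ j ∈ Finset.range K, u j (x j) t :=
      Finset.prod_congr rfl fun j hj => max_eq_left (hup j (Finset.mem_range.1 hj)).le
    rwa [c1, c2] at h4
  have hslope := (hasDerivAt_iff_tendsto_slope_left_right.1 hder).1
  have hge := ge_of_tendsto hslope (b := 0) (by
    filter_upwards [hev, self_mem_nhdsWithin] with s h1 h2
    rw [slope_def_field]
    apply div_nonneg_of_nonpos
    · simp only [Pi.mul_apply]; linarith
    · have : s < t := h2
      linarith)
  linarith

def ZNSol (B c u : ℝ → ℝ → ℝ) (x t : ℝ) : Prop :=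
  ContDiffAt ℝ 2 (fun y => u y t) x ∧
  HasDerivAt (fun s => u x s) (deriv (deriv (fun y => u y t)) x
    + B x t * deriv (fun y => u y t) x + c x t * u x t) t

theorem zn_ev_diff (f : ℝ → ℝ) (x : ℝ) (hf : ContDiffAt ℝ 2 f x) :
    ∀ᶠ y in nhds x, DifferentiableAt ℝ f y := by
  filter_upwards [hf.eventually (by simp)] with y hy
  exact hy.differentiableAt (by simp)

theorem zn_deriv_diff (f : ℝ → ℝ) (x : ℝ) (hf : ContDiffAt ℝ 2 f x) :
    DifferentiableAt ℝ (deriv f) x := by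
  have := hf.derivWithin (m := 1) (by norm_num)
  exact this.differentiableAt (by simp)

theorem zn_dd_sub (f g : ℝ → ℝ) (x : ℝ) (hf : ContDiffAt ℝ 2 f x) (hg : ContDiffAt ℝ 2 g x) :
    deriv (fun y => f y - g y) x = deriv f x - deriv g x ∧
    deriv (deriv (fun y => f y - g y)) x = deriv (deriv f) x - deriv (deriv g) x := by
  have h1 : deriv (fun y => f y - g y) =ᶠ[nhds x] fun y => deriv f y - deriv g y := by
    filter_upwards [zn_ev_diff f x hf, zn_ev_diff g x hg] with y h1 h2
    exact deriv_fun_sub h1 h2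
  refine ⟨h1.self_of_nhds, ?_⟩
  rw [h1.deriv_eq]
  exact deriv_fun_sub (zn_deriv_diff f x hf) (zn_deriv_diff g x hg)

theorem zn_sol_smul (B c u : ℝ → ℝ → ℝ) (x t a : ℝ) (h : ZNSol B c u x t) :
    ZNSol B c (fun x t => a * u x t) x t := by
  refine ⟨contDiffAt_const.mul h.1, ?_⟩
  have h2 := h.2.const_mul a
  refine h2.congr_deriv ?_
  have e1 : deriv (fun y => a * u y t) = fun y => a * deriv (fun y => u y t) y := by
    funext y; exact deriv_const_mul_field a
  rw [e1]
  have e2 : deriv (fun y => a * deriv (fun y => u y t) y) x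
      = a * deriv (deriv (fun y => u y t)) x := deriv_const_mul_field a
  rw [e2]; ring

set_option maxHeartbeats 1000000 in
theorem zn_smp (B c u : ℝ → ℝ → ℝ) (p q T0 T1 B0 C0 σ z : ℝ) (hσ : σ = 1 ∨ σ = -1)
    (hT : T0 < T1) (hz : z ∈ Ioo p q) (hB0 : 0 ≤ B0) (hC0 : 0 ≤ C0)
    (hcont : ContinuousOn (fun p : ℝ × ℝ => u p.1 p.2) (Icc p q ×ˢ Icc T0 T1))
    (hnn : ∀ x ∈ Icc p q, ∀ t ∈ Icc T0 T1, 0 ≤ u x t)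
    (hB : ∀ x ∈ Ioo p q, ∀ t ∈ Ioc T0 T1, |B x t| ≤ B0)
    (hC : ∀ x ∈ Ioo p q, ∀ t ∈ Ioc T0 T1, |c x t| ≤ C0)
    (hpt : ∀ x ∈ Ioo p q, ∀ t ∈ Ioc T0 T1, HasDerivAt (fun y => u y t) 0 x ∨ ZNSol B c u x t)
    (hpos1 : σ = 1 → 0 < u q T1) (hpos2 : σ = -1 → 0 < u p T1) : 0 < u z T1 := by
  have hpq : p < q := hz.1.trans hz.2
  obtain ⟨e, f, he, hf, hue, hez, hzf, hef⟩ : ∃ e f : ℝ, e ∈ Icc p q ∧ f ∈ Icc p q ∧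
      0 < u e T1 ∧ 0 < σ * (e - z) ∧ 0 < σ * (z - f) ∧ ((p = f ∧ q = e) ∨ (p = e ∧ q = f)) := by
    rcases hσ with h | h
    · exact ⟨q, p, ⟨hpq.le, le_rfl⟩, ⟨le_rfl, hpq.le⟩, hpos1 h, by rw [h]; linarith [hz.2],
        by rw [h]; linarith [hz.1], Or.inl ⟨rfl, rfl⟩⟩
    · exact ⟨p, q, ⟨le_rfl, hpq.le⟩, ⟨hpq.le, le_rfl⟩, hpos2 h, by rw [h]; linarith [hz.1],
        by rw [h]; linarith [hz.2], Or.inr ⟨rfl, rfl⟩⟩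
  have hσ2 : σ * σ = 1 := by rcases hσ with h | h <;> rw [h] <;> norm_num
  have hσa : |σ| = 1 := by rcases hσ with h | h <;> rw [h] <;> norm_num
  set η := u e T1 / 2 with hη
  have hηp : 0 < η := by positivity
  obtain ⟨S0, hS0, hS1, hS⟩ : ∃ S0, T0 ≤ S0 ∧ S0 < T1 ∧ ∀ t ∈ Icc S0 T1, η ≤ u e t := by
    have hc : ContinuousOn (fun t => u e t) (Icc T0 T1) :=
      hcont.comp (f := fun t => (e, t)) (by fun_prop) (fun t ht => ⟨he, ht⟩)
    have hw := hc T1 ⟨hT.le, le_rfl⟩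
    have hev : ∀ᶠ t in nhdsWithin T1 (Icc T0 T1), η < u e t :=
      hw.eventually (Ioi_mem_nhds (by rw [hη]; linarith))
    rw [nhdsWithin_Icc_eq_nhdsLE hT] at hev
    obtain ⟨l, hl, hl2⟩ := (mem_nhdsLE_iff_exists_Icc_subset).1 hev
    refine ⟨max T0 l, le_max_left _ _, max_lt hT hl, fun t ht => ?_⟩
    exact (hl2 ⟨(le_max_right _ _).trans ht.1, ht.2⟩).le
  set L := q - p with hL
  have hLp : 0 < L := by rw [hL]; linarith
  set κ := (L + 1) / (T1 - S0) with hκ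
  have hd : 0 < T1 - S0 := by linarith
  have hκp : 0 < κ := by positivity
  have hκe : κ * (T1 - S0) = L + 1 := by rw [hκ]; field_simp
  set A := B0 + C0 + κ + 1 with hA
  have hA1 : 1 ≤ A := by rw [hA]; linarith
  set h : ℝ → ℝ → ℝ := fun x t => σ * (x - f) - κ * (T1 - t) with hh
  have hsl : ∀ x ∈ Icc p q, σ * (x - f) ≤ L := by
    intro x hx
    have : |σ * (x - f)| ≤ L := by
      rw [abs_mul, hσa, one_mul, abs_le]
      constructor <;> linarith [hx.1, hx.2, hf.1, hf.2]
    exact (le_abs_self _).trans this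
  set ε := η / Real.exp (A * L) with hε
  have hεp : 0 < ε := by positivity
  have hεe : ε * Real.exp (A * L) = η := by rw [hε]; field_simp
  set w : ℝ → ℝ → ℝ := fun x t => ε * (Real.exp (A * h x t) - 1) - u x t with hw
  by_contra hcon
  push Not at hcon
  have hsub : Icc S0 T1 ⊆ Icc T0 T1 := Icc_subset_Icc_left hS0
  have key := zn_kp 1 (fun _ => w) p q S0 T1 C0 hS1.le (by
      intro i _
      have : ContinuousOn (fun p : ℝ × ℝ => u p.1 p.2) (Icc p q ×ˢ Icc S0 T1) :=
        hcont.mono (prod_mono le_rfl hsub)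
      exact ContinuousOn.sub (by simp only [hh]; fun_prop) this) ?_ (by intro i hi; omega) ?_ ?_
      ⟨fun _ => z, by
        refine ⟨fun j _ => ⟨⟨hz.1.le, hz.2.le⟩, ?_⟩, fun j hj => by omega⟩
        simp only [hw, hh]
        have : 1 < Real.exp (A * (σ * (z - f) - κ * (T1 - T1))) := by
          rw [Real.one_lt_exp_iff]
          apply mul_pos (by linarith)
          simpa using hzf
        nlinarith⟩
  · obtain ⟨y, hy1, -⟩ := key
    obtain ⟨hyI, hyp⟩ := hy1 0 (by norm_num)
    simp only [hw] at hyp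
    have h1 : h (y 0) S0 < 0 := by
      simp only [hh]; rw [hκe]; linarith [hsl _ hyI]
    have h2 : Real.exp (A * h (y 0) S0) < 1 := by
      rw [Real.exp_lt_one_iff]; nlinarith
    have h3 := hnn _ hyI S0 ⟨hS0, hS1.le⟩
    nlinarith
  · -- H
    intro i _ x hx t ht hwp hmax
    have ht' : t ∈ Ioc T0 T1 := ⟨hS0.trans_lt ht.1, ht.2⟩
    simp only [hw] at hwp hmax ⊢
    set E := Real.exp (A * h x t) with hE
    have hEp : 0 < E := Real.exp_pos _
    have dψ : ∀ y, HasDerivAt (fun y => ε * (Real.exp (A * h y t) - 1))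
        (ε * A * σ * Real.exp (A * h y t)) y := by
      intro y
      have h1 : HasDerivAt (fun y => A * h y t) (A * σ) y := by
        have := (((((hasDerivAt_id y).sub_const f).const_mul σ).sub_const (κ * (T1 - t))).const_mul A)
        simpa [hh] using this
      have := (h1.exp.sub_const 1).const_mul ε
      exact this.congr_deriv (by ring)
    have dψ1 : deriv (fun y => ε * (Real.exp (A * h y t) - 1)) =
        fun y => ε * A * σ * Real.exp (A * h y t) := funext fun y => (dψ y).deriv
    have dψ2 : deriv (deriv (fun y => ε * (Real.exp (A * h y t) - 1))) x = ε * A * A * E := by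
      rw [dψ1]
      have h1 : HasDerivAt (fun y => A * h y t) (A * σ) x := by
        have := (((((hasDerivAt_id x).sub_const f).const_mul σ).sub_const (κ * (T1 - t))).const_mul A)
        simpa [hh] using this
      rw [(h1.exp.const_mul (ε * A * σ)).deriv]
      rw [← hE]
      linear_combination (ε * A * A * E) * hσ2
    rcases hpt x hx t ht' with h0 | hsol
    · exfalso
      have := hmax.hasDerivAt_eq_zero ((dψ x).sub h0)
      rw [sub_zero] at this
      have hσ0 : σ ≠ 0 := by intro h; rw [h] at hσ2; norm_num at hσ2
      have hA0 : A ≠ 0 := by linarith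
      simp [hεp.ne', hσ0, hA0] at this
    · have hψc : ContDiffAt ℝ 2 (fun y => ε * (Real.exp (A * h y t) - 1)) x := by
        simp only [hh]; fun_prop
      have hs := zn_second _ x hmax (hψc.sub hsol.1)
      have hdd := zn_dd_sub _ _ x hψc hsol.1
      rw [hdd.1, hdd.2, dψ2, dψ1] at hs
      obtain ⟨hs1, hs2⟩ := hs
      simp only [← hE] at hs1
      have dt : HasDerivAt (fun s => ε * (Real.exp (A * h x s) - 1)) (ε * A * κ * E) t := by
        have h1 : HasDerivAt (fun s => A * h x s) (A * κ) t := by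
          have := ((((hasDerivAt_id t).const_sub T1).const_mul κ).const_sub (σ * (x - f))).const_mul A
          simpa [hh] using this
        have := (h1.exp.sub_const 1).const_mul ε
        exact this.congr_deriv (by rw [hE]; ring)
      refine ⟨_, dt.sub hsol.2, ?_⟩
      have hu := hnn x ⟨hx.1.le, hx.2.le⟩ t ⟨ht'.1.le, ht'.2⟩
      have hb := abs_le.1 (hB x hx t ht')
      have hc := abs_le.1 (hC x hx t ht')
      have hux : deriv (fun y => u y t) x = ε * A * σ * E := by linarith
      rw [hux]
      set W := ε * (E - 1) - u x t with hW
      have hψp : 0 < ε * (E - 1) := by linarith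
      have i1 : -(c x t * u x t) ≤ C0 * W + C0 * (ε * E) := by
        have : c x t * u x t = c x t * (ε * (E - 1)) - c x t * W := by rw [hW]; ring
        rw [this]
        have j1 : c x t * W ≤ C0 * W := mul_le_mul_of_nonneg_right hc.2 hwp.le
        have j2 : -(C0) * (ε * (E - 1)) ≤ c x t * (ε * (E - 1)) :=
          mul_le_mul_of_nonneg_right hc.1 hψp.le
        have j3 : 0 ≤ C0 * ε := by positivity
        linarith
      have i2 : -(B x t * (ε * A * σ * E)) ≤ B0 * (ε * A * E) := by
        have k : |B x t * (ε * A * σ * E)| ≤ B0 * (ε * A * E) := by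
          rw [abs_mul, abs_mul, abs_mul, abs_mul, hσa, abs_of_pos hεp, abs_of_pos hEp,
            abs_of_pos (by linarith : 0 < A)]
          have : 0 ≤ ε * A * E := by positivity
          have := mul_le_mul_of_nonneg_right (hB x hx t ht') this
          linarith
        linarith [neg_abs_le (B x t * (ε * A * σ * E))]
      have i3 : A * κ + B0 * A + C0 ≤ A * A := by
        have j1 : A * A = A * κ + B0 * A + C0 * A + A := by
          rw [hA]; ring
        have j2 : C0 * 1 ≤ C0 * A := mul_le_mul_of_nonneg_left hA1 hC0
        linarith
      have i4 := mul_le_mul_of_nonneg_left i3 (mul_pos hεp hEp).le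
      linarith
  all_goals
    intro _ t ht
    have hfb : w f t ≤ 0 := by
      simp only [hw]
      have h1 : h f t ≤ 0 := by
        simp only [hh]; rw [sub_self, mul_zero]
        nlinarith [ht.2]
      have h2 : Real.exp (A * h f t) ≤ 1 := by
        rw [Real.exp_le_one_iff]; nlinarith
      have h3 := hnn _ hf t (hsub ht)
      nlinarith
    have heb : w e t ≤ 0 := by
      simp only [hw]
      have h1 : h e t ≤ L := by
        simp only [hh]
        nlinarith [ht.2, hsl e he]
      have h2 : Real.exp (A * h e t) ≤ Real.exp (A * L) := by
        rw [Real.exp_le_exp]; nlinarith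
      have h3 := hS t ht
      nlinarith
    rcases hef with ⟨h1, h2⟩ | ⟨h1, h2⟩
    all_goals simp only [h1, h2]; assumption

theorem zn_good (B c u : ℝ → ℝ → ℝ) (α β T0 T1 B0 C0 : ℝ) (hT : T0 < T1) (hαβ : α < β)
    (hB0 : 0 ≤ B0) (hC0 : 0 ≤ C0)
    (hcont : ContinuousOn (fun p : ℝ × ℝ => u p.1 p.2) (Icc α β ×ˢ Icc T0 T1))
    (hB : ∀ x ∈ Ioo α β, ∀ t ∈ Ioc T0 T1, |B x t| ≤ B0)
    (hC : ∀ x ∈ Ioo α β, ∀ t ∈ Ioc T0 T1, |c x t| ≤ C0)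
    (hpt : ∀ x ∈ Ioo α β, ∀ t ∈ Ioc T0 T1, ZNSol B c u x t)
    (hα : 0 < u α T1) (hβ : u β T1 < 0) :
    ∃ s ∈ Ioc T0 T1, ∃ ξ ∈ Ioo α β, u ξ s = 0 ∧ deriv (fun y => u y s) ξ ≠ 0 := by
  by_contra hcon
  push Not at hcon
  have key : ∀ z ∈ Ioo α β, 0 < max (u z T1) 0 := by
    intro z hz
    apply zn_smp B c (fun x t => max (u x t) 0) α β T0 T1 B0 C0 (-1) z (Or.inr rfl) hT hz hB0 hC0
      (hcont.sup continuousOn_const) (fun x _ t _ => le_max_right _ _) hB hC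
    · intro x hx t ht
      have hs := hpt x hx t ht
      have hcx : ContinuousAt (fun y => u y t) x := hs.1.continuousAt
      rcases lt_trichotomy (u x t) 0 with h | h | h
      · left
        have : (fun y => max (u y t) 0) =ᶠ[nhds x] fun _ => 0 := by
          filter_upwards [hcx.eventually (Iio_mem_nhds h)] with y hy
          exact max_eq_right (le_of_lt hy)
        exact (hasDerivAt_const x (0:ℝ)).congr_of_eventuallyEq this
      · left
        have h0 := hcon t ht x hx h
        have hd : HasDerivAt (fun y => u y t) 0 x := by
          rw [← h0]; exact (hs.1.differentiableAt (by simp)).hasDerivAt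
        rw [hasDerivAt_iff_isLittleO] at hd ⊢
        refine Asymptotics.IsBigO.trans_isLittleO ?_ hd
        apply Asymptotics.IsBigO.of_bound 1
        filter_upwards with y
        simp only [h, smul_zero, sub_zero, max_self, one_mul, Real.norm_eq_abs]
        rcases le_total (u y t) 0 with h1 | h1
        · rw [max_eq_right h1]; simp
        · rw [max_eq_left h1]
      · right
        have e1 : (fun y => max (u y t) 0) =ᶠ[nhds x] fun y => u y t := by
          filter_upwards [hcx.eventually (Ioi_mem_nhds h)] with y hy
          exact max_eq_left (le_of_lt hy)
        have e2 : (fun s => max (u x s) 0) =ᶠ[nhds t] fun s => u x s := by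
          filter_upwards [hs.2.continuousAt.eventually (Ioi_mem_nhds h)] with y hy
          exact max_eq_left (le_of_lt hy)
        refine ⟨hs.1.congr_of_eventuallyEq e1, ?_⟩
        rw [e1.deriv_eq, e1.deriv.deriv_eq]
        simp only [max_eq_left h.le]
        exact hs.2.congr_of_eventuallyEq e2
    · intro h; norm_num at h
    · intro _; exact lt_max_of_lt_left hα
  have hc : ContinuousOn (fun x => u x T1) (Icc α β) :=
    hcont.comp (f := fun x => (x, T1)) (by fun_prop) (fun x hx => ⟨hx, ⟨hT.le, le_rfl⟩⟩)
  have hw := hc β ⟨hαβ.le, le_rfl⟩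
  have hev : ∀ᶠ x in nhdsWithin β (Icc α β), u x T1 < 0 := hw.eventually (Iio_mem_nhds hβ)
  rw [nhdsWithin_Icc_eq_nhdsLE hαβ] at hev
  obtain ⟨l, hl, hl2⟩ := (mem_nhdsLE_iff_exists_Icc_subset).1 hev
  have hl' : l < β := hl
  have hm : max α l < β := max_lt hαβ hl'
  have h1 := key ((max α l + β) / 2) ⟨by linarith [le_max_left α l], by linarith⟩
  have h2 : u ((max α l + β) / 2) T1 < 0 := hl2 ⟨by linarith [le_max_right α l], by linarith⟩
  rw [max_eq_right h2.le] at h1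
  exact lt_irrefl _ h1

theorem zn_init (f : ℝ → ℝ) (α β ξ D z1 M : ℝ) (hξ : ξ ∈ Ioo α β) (hD : 0 < D) (hM : 0 < M)
    (hf : ContinuousOn f (Icc α β)) (hpos : ∀ x ∈ Icc α β, x < ξ → 0 < f x)
    (hneg : ∀ x ∈ Icc α β, ξ < x → f x < 0) (hc : ContDiffAt ℝ 2 f ξ) (hd : deriv f ξ < 0)
    (hw : ∀ x ∈ Icc α β, |1 - D * (x - z1)| ≤ M) :
    ∃ ε0 > 0, ∀ ε, 0 < ε → ε ≤ ε0 → ∀ x ∈ Icc α β, ∀ y ∈ Icc α β, x < y →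
      f x < ε * (1 - D * (x - z1)) → ε * (1 - D * (y - z1)) < f y → False := by
  set μ := -deriv f ξ / 2 with hμ
  have hμp : 0 < μ := by rw [hμ]; linarith
  have hcd : ContinuousAt (deriv f) ξ := (zn_deriv_diff f ξ hc).continuousAt
  have hev : ∀ᶠ x in nhds ξ, DifferentiableAt ℝ f x ∧ deriv f x < -μ :=
    (zn_ev_diff f ξ hc).and (hcd.eventually (Iio_mem_nhds (by rw [hμ]; linarith)))
  obtain ⟨d, hdp, hball⟩ := Metric.eventually_nhds_iff_ball.1 hev
  rw [Real.ball_eq_Ioo] at hball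
  obtain ⟨ν1, hν1, hν1'⟩ := (isCompact_Icc (a := α) (b := ξ - d)).exists_forall_le' (f := f)
    (hf.mono (Icc_subset_Icc_right (by linarith [hξ.2]))) (a := 0)
    (fun x hx => hpos x ⟨hx.1, by linarith [hx.2, hξ.2]⟩ (by linarith [hx.2]))
  obtain ⟨ν2, hν2, hν2'⟩ := (isCompact_Icc (a := ξ + d) (b := β)).exists_forall_le'
    (f := fun x => - f x)
    (hf.neg.mono (Icc_subset_Icc_left (by linarith [hξ.1]))) (a := 0)
    (fun x hx => by
      have := hneg x ⟨by linarith [hx.1, hξ.1], hx.2⟩ (by linarith [hx.1])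
      linarith)
  refine ⟨min (μ / D) (min (ν1 / M) (ν2 / M)), by positivity, ?_⟩
  intro ε hε hε0 x hx y hy hxy h1 h2
  have e1 : ε * D ≤ μ := by
    rw [← le_div_iff₀ hD]; exact hε0.trans (min_le_left _ _)
  have e2 : ε * M ≤ ν1 := by
    rw [← le_div_iff₀ hM]; exact hε0.trans ((min_le_right _ _).trans (min_le_left _ _))
  have e3 : ε * M ≤ ν2 := by
    rw [← le_div_iff₀ hM]; exact hε0.trans ((min_le_right _ _).trans (min_le_right _ _))
  have hxl : ξ - d < x := by
    by_contra hcon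
    push Not at hcon
    have := hν1' x ⟨hx.1, hcon⟩
    have h3 := (abs_le.1 (hw x hx)).2
    have := mul_le_mul_of_nonneg_left h3 hε.le
    linarith
  have hyr : y < ξ + d := by
    by_contra hcon
    push Not at hcon
    have := hν2' y ⟨hcon, hy.2⟩
    have h3 := (abs_le.1 (hw y hy)).1
    have := mul_le_mul_of_nonneg_left h3 hε.le
    linarith
  have hmv : f y - f x ≤ (-μ) * (y - x) := by
    apply (convex_Ioo (ξ - d) (ξ + d)).image_sub_le_mul_sub_of_deriv_le
      (f := f) (C := -μ)
    · intro z hz; exact (hball z hz).1.continuousAt.continuousWithinAt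
    · intro z hz; rw [interior_Ioo] at hz; exact (hball z hz).1.differentiableWithinAt
    · intro z hz; rw [interior_Ioo] at hz; exact (hball z hz).2.le
    · exact ⟨hxl, by linarith⟩
    · exact ⟨by linarith, hyr⟩
    · exact hxy.le
  have := mul_le_mul_of_nonneg_right e1 (by linarith : 0 ≤ y - x)
  linarith

theorem zn_H (B c u : ℝ → ℝ → ℝ) (x t s τ ε D z1 Kc B0 C0 M : ℝ) (hτ : τ = 1 ∨ τ = -1)
    (hε : 0 < ε) (hD : 0 < D) (hs : ZNSol B c u x t) (hB : |B x t| ≤ B0) (hC : |c x t| ≤ C0)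
    (hst : s ≤ t) (hK : B0 * D + C0 * (M + 1) ≤ Kc) (hK0 : 0 ≤ Kc) (hKt : Kc * (t - s) ≤ 1)
    (hM : |1 - D * (x - z1)| ≤ M)
    (hp : 0 < τ * u x t - ε * (τ * (1 - D * (x - z1)) + Kc * (t - s)))
    (hmax : IsLocalMax (fun y => τ * u y t - ε * (τ * (1 - D * (y - z1)) + Kc * (t - s))) x) :
    ∃ d, HasDerivAt (fun r => τ * u x r - ε * (τ * (1 - D * (x - z1)) + Kc * (r - s))) d t ∧
      d ≤ C0 * (τ * u x t - ε * (τ * (1 - D * (x - z1)) + Kc * (t - s))) := by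
  have hs' := zn_sol_smul B c u x t τ hs
  have hlin : ∀ y, HasDerivAt (fun y => ε * (τ * (1 - D * (y - z1)) + Kc * (t - s)))
      (-(ε * τ * D)) y := by
    intro y
    have := (((((((hasDerivAt_id y).sub_const z1).const_mul D).const_sub 1).const_mul τ).add_const
      (Kc * (t - s))).const_mul ε)
    refine this.congr_deriv (by ring)
  have hlin1 : deriv (fun y => ε * (τ * (1 - D * (y - z1)) + Kc * (t - s))) =
      fun _ => -(ε * τ * D) := funext fun y => (hlin y).deriv
  have hlc : ContDiffAt ℝ 2 (fun y => ε * (τ * (1 - D * (y - z1)) + Kc * (t - s))) x := by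
    fun_prop
  have h2 := zn_second _ x hmax (hs'.1.sub hlc)
  have h3 := zn_dd_sub _ _ x hs'.1 hlc
  rw [h3.1, h3.2, hlin1] at h2
  simp only [deriv_const, sub_zero] at h2
  obtain ⟨h4, h5⟩ := h2
  have hdt : HasDerivAt (fun r => ε * (τ * (1 - D * (x - z1)) + Kc * (r - s))) (ε * Kc) t := by
    have := ((((hasDerivAt_id t).sub_const s).const_mul Kc).const_add
      (τ * (1 - D * (x - z1)))).const_mul ε
    refine this.congr_deriv (by ring)
  refine ⟨_, hs'.2.sub hdt, ?_⟩
  have hτa : |τ| = 1 := by rcases hτ with h | h <;> rw [h] <;> norm_num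
  have h6 : deriv (fun y => τ * u y t) x = -(ε * τ * D) := by linarith
  rw [h6]
  beta_reduce
  set F := τ * u x t - ε * (τ * (1 - D * (x - z1)) + Kc * (t - s)) with hF
  have h7 : τ * u x t = F + ε * (τ * (1 - D * (x - z1)) + Kc * (t - s)) := by rw [hF]; ring
  rw [h7]
  set Q := τ * (1 - D * (x - z1)) + Kc * (t - s) with hQ
  have hQa : |Q| ≤ M + 1 := by
    refine (abs_add_le _ _).trans ?_
    rw [abs_mul, hτa, one_mul, abs_of_nonneg (mul_nonneg hK0 (by linarith))]
    linarith
  have i1 : B x t * -(ε * τ * D) ≤ ε * (B0 * D) := by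
    have k : |B x t * -(ε * τ * D)| ≤ ε * (B0 * D) := by
      rw [abs_mul, abs_neg, abs_mul, abs_mul, hτa, abs_of_pos hε, abs_of_pos hD]
      have := mul_le_mul_of_nonneg_right hB (by positivity : 0 ≤ ε * D)
      linarith
    exact (le_abs_self _).trans k
  have i2 : c x t * (ε * Q) ≤ ε * (C0 * (M + 1)) := by
    have k : |c x t * (ε * Q)| ≤ ε * (C0 * (M + 1)) := by
      rw [abs_mul, abs_mul, abs_of_pos hε]
      have := mul_le_mul hC hQa (abs_nonneg _) ((abs_nonneg _).trans hC)
      have := mul_le_mul_of_nonneg_left this hε.le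
      linarith
    exact (le_abs_self _).trans k
  have i3 : c x t * F ≤ C0 * F :=
    mul_le_mul_of_nonneg_right ((le_abs_self _).trans hC) hp.le
  have i4 := mul_le_mul_of_nonneg_left hK hε.le
  linarith

theorem zn_mid (B c u : ℝ → ℝ → ℝ) (α β Ta Tb B0 C0 : ℝ) (hαβ : α < β)
    (hB0 : 0 ≤ B0) (hC0 : 0 ≤ C0)
    (hcont : ContinuousOn (fun p : ℝ × ℝ => u p.1 p.2) (Icc α β ×ˢ Ioo Ta Tb))
    (hB : ∀ x ∈ Ioo α β, ∀ t ∈ Ioo Ta Tb, |B x t| ≤ B0)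
    (hC : ∀ x ∈ Ioo α β, ∀ t ∈ Ioo Ta Tb, |c x t| ≤ C0)
    (hpt : ∀ x ∈ Ioo α β, ∀ t ∈ Ioo Ta Tb, ZNSol B c u x t)
    (hα : ∀ t ∈ Ioo Ta Tb, 0 < u α t) (hβ : ∀ t ∈ Ioo Ta Tb, u β t < 0)
    (hno : ∀ t ∈ Ioo Ta Tb, ∀ y ∈ Icc α β, ∀ z ∈ Icc α β, y < z → u y t < 0 → 0 < u z t → False)
    (t : ℝ) (ht : t ∈ Ioo Ta Tb) : ∃! z, z ∈ Icc α β ∧ u z t = 0 := by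
  have hct : ∀ x ∈ Icc α β, ContinuousOn (fun t => u x t) (Ioo Ta Tb) := fun x hx =>
    hcont.comp (f := fun t => (x, t)) (by fun_prop) (fun t ht => ⟨hx, ht⟩)
  have hcx : ∀ t ∈ Ioo Ta Tb, ContinuousOn (fun x => u x t) (Icc α β) := fun t ht =>
    hcont.comp (f := fun x => (x, t)) (by fun_prop) (fun x hx => ⟨hx, ht⟩)
  have hback : ∀ t ∈ Ioo Ta Tb, ∀ P : ℝ → Prop, (∀ᶠ s in nhds t, P s) →
      ∃ T0, Ta < T0 ∧ T0 < t ∧ ∀ s ∈ Icc T0 t, P s := by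
    intro t ht P hP
    obtain ⟨l, hl, hl2⟩ := (mem_nhdsLE_iff_exists_Icc_subset).1 (nhdsWithin_le_nhds (s := Iic t) hP)
    have hl' : l < t := hl
    have hm : max l Ta < t := max_lt hl' ht.1
    refine ⟨(max l Ta + t) / 2, by linarith [le_max_right l Ta], by linarith, fun s hs => ?_⟩
    exact hl2 ⟨by linarith [le_max_left l Ta, hs.1], hs.2⟩
  have hP : ∀ t ∈ Ioo Ta Tb, ∀ y ∈ Icc α β, 0 < u y t → ∀ z ∈ Icc α β, z < y → 0 < u z t := by
    intro t ht y hy hyp z hz hzy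
    rcases hz.1.lt_or_eq with hz' | hz'
    swap
    · rw [← hz']; exact hα t ht
    obtain ⟨T0, h1, h2, h3⟩ := hback t ht (fun s => 0 < u y s)
      (((hct y hy).continuousAt (Ioo_mem_nhds ht.1 ht.2)).eventually (Ioi_mem_nhds hyp))
    have hsub : Icc T0 t ⊆ Ioo Ta Tb := fun s hs => ⟨h1.trans_le hs.1, hs.2.trans_lt ht.2⟩
    have hsub2 : Ioc T0 t ⊆ Ioo Ta Tb := fun s hs => hsub ⟨hs.1.le, hs.2⟩
    have hsx : Ioo α y ⊆ Ioo α β := Ioo_subset_Ioo_right hy.2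
    refine zn_smp B c u α y T0 t B0 C0 1 z (Or.inl rfl) h2 ⟨hz', hzy⟩ hB0 hC0
      (hcont.mono (prod_mono (Icc_subset_Icc_right hy.2) hsub)) ?_
      (fun x hx s hs => hB x (hsx hx) s (hsub2 hs)) (fun x hx s hs => hC x (hsx hx) s (hsub2 hs))
      (fun x hx s hs => Or.inr (hpt x (hsx hx) s (hsub2 hs))) (fun _ => hyp)
      (fun h => by norm_num at h)
    intro x hx s hs
    by_contra hcon
    push Not at hcon
    rcases hx.2.lt_or_eq with h | h
    · exact hno s (hsub hs) x ⟨hx.1, hx.2.trans hy.2⟩ y hy h hcon (h3 s hs)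
    · rw [h] at hcon; linarith [h3 s hs]
  have hN : ∀ t ∈ Ioo Ta Tb, ∀ y ∈ Icc α β, u y t < 0 → ∀ z ∈ Icc α β, y < z → u z t < 0 := by
    intro t ht y hy hyp z hz hzy
    rcases hz.2.lt_or_eq with hz' | hz'
    swap
    · rw [hz']; exact hβ t ht
    obtain ⟨T0, h1, h2, h3⟩ := hback t ht (fun s => u y s < 0)
      (((hct y hy).continuousAt (Ioo_mem_nhds ht.1 ht.2)).eventually (Iio_mem_nhds hyp))
    have hsub : Icc T0 t ⊆ Ioo Ta Tb := fun s hs => ⟨h1.trans_le hs.1, hs.2.trans_lt ht.2⟩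
    have hsub2 : Ioc T0 t ⊆ Ioo Ta Tb := fun s hs => hsub ⟨hs.1.le, hs.2⟩
    have hsx : Ioo y β ⊆ Ioo α β := Ioo_subset_Ioo_left hy.1
    have := zn_smp B c (fun x t => (-1) * u x t) y β T0 t B0 C0 (-1) z (Or.inr rfl) h2 ⟨hzy, hz'⟩
      hB0 hC0
      (continuousOn_const.mul (hcont.mono (prod_mono (Icc_subset_Icc_left hy.1) hsub))) ?_
      (fun x hx s hs => hB x (hsx hx) s (hsub2 hs)) (fun x hx s hs => hC x (hsx hx) s (hsub2 hs))
      (fun x hx s hs => Or.inr (zn_sol_smul B c u x s (-1) (hpt x (hsx hx) s (hsub2 hs))))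
      (fun h => by norm_num at h) (fun _ => by linarith)
    · linarith
    intro x hx s hs
    by_contra hcon
    push Not at hcon
    rcases hx.1.lt_or_eq with h | h
    · exact hno s (hsub hs) y hy x ⟨hy.1.trans hx.1, hx.2⟩ h (h3 s hs) (by linarith)
    · rw [← h] at hcon; linarith [h3 s hs]
  have hflat : ∀ t ∈ Ioo Ta Tb, ∀ z1 ∈ Icc α β, ∀ z2 ∈ Icc α β, u z1 t = 0 → u z2 t = 0 →
      ∀ y ∈ Icc z1 z2, u y t = 0 := by
    intro t ht z1 hz1 z2 hz2 h1 h2 y hy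
    have hyI : y ∈ Icc α β := ⟨hz1.1.trans hy.1, hy.2.trans hz2.2⟩
    rcases lt_trichotomy (u y t) 0 with h | h | h
    · rcases hy.2.lt_or_eq with h' | h'
      · linarith [hN t ht y hyI h z2 hz2 h']
      · rw [h']; exact h2
    · exact h
    · rcases hy.1.lt_or_eq with h' | h'
      · linarith [hP t ht y hyI h z1 hz1 h']
      · rw [← h']; exact h1
  -- existence
  have hex : ∃ z, z ∈ Icc α β ∧ u z t = 0 := by
    have := intermediate_value_Icc' hαβ.le (hcx t ht)
    obtain ⟨z, hz, hz0⟩ := this ⟨(hβ t ht).le, (hα t ht).le⟩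
    exact ⟨z, hz, hz0⟩
  suffices huniq : ∀ z1 ∈ Icc α β, ∀ z2 ∈ Icc α β, u z1 t = 0 → u z2 t = 0 → z1 < z2 → False by
    obtain ⟨z, hz, hz0⟩ := hex
    refine ⟨z, ⟨hz, hz0⟩, ?_⟩
    rintro y ⟨hy, hy0⟩
    rcases lt_trichotomy y z with h | h | h
    · exact (huniq y hy z hz hy0 hz0 h).elim
    · exact h
    · exact (huniq z hz y hy hz0 hy0 h).elim
  intro z1 hz1 z2 hz2 h1 h2 h12
  set D := 2 / (z2 - z1) with hD
  have hDp : 0 < D := by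
    apply div_pos two_pos; linarith
  have hDz : D * (z2 - z1) = 2 := by
    rw [hD]; field_simp [sub_ne_zero.2 h12.ne']
  set M := 1 + D * (β - α) with hM
  have hMp : 0 < M := by
    have := mul_pos hDp (sub_pos.2 hαβ); linarith
  have hw : ∀ x ∈ Icc α β, |1 - D * (x - z1)| ≤ M := by
    intro x hx
    have hb : |x - z1| ≤ β - α := by
      rw [abs_le]; constructor <;> linarith [hx.1, hx.2, hz1.1, hz1.2]
    calc |1 - D * (x - z1)| ≤ |(1:ℝ)| + |D * (x - z1)| := abs_sub _ _
      _ ≤ M := by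
        rw [abs_one, abs_mul, abs_of_pos hDp, hM]
        have := mul_le_mul_of_nonneg_left hb hDp.le
        linarith
  set Kc := B0 * D + C0 * (M + 1) + 1 with hKc
  have hKp : 0 < Kc := by positivity
  have hmx : max Ta (t - 1 / (2 * Kc)) < t := max_lt ht.1 (by
    have : 0 < 1 / (2 * Kc) := by positivity
    linarith)
  set T0 := (max Ta (t - 1 / (2 * Kc)) + t) / 2 with hT0
  have hT0a : Ta < T0 := by linarith [le_max_left Ta (t - 1 / (2 * Kc))]
  have hT0b : T0 < t := by linarith
  have hT0c : Kc * (t - T0) ≤ 1 / 2 := by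
    have : t - T0 ≤ 1 / (2 * Kc) := by linarith [le_max_right Ta (t - 1 / (2 * Kc))]
    have h3 := mul_le_mul_of_nonneg_left this hKp.le
    have h4 : Kc * (1 / (2 * Kc)) = 1 / 2 := by field_simp
    linarith
  set T1 := (T0 + t) / 2 with hT1
  have hT01 : T0 < T1 := by linarith
  have hT1t : T1 < t := by linarith
  have hsubA : Icc T0 T1 ⊆ Ioo Ta Tb := fun s hs => ⟨by linarith [hs.1], by linarith [hs.2, ht.2]⟩
  have hsubB : Ioc T0 T1 ⊆ Ioo Ta Tb := fun s hs => hsubA ⟨hs.1.le, hs.2⟩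
  obtain ⟨s, hs, ξ, hξ, hξ0, hξd⟩ := zn_good B c u α β T0 T1 B0 C0 hT01 hαβ hB0 hC0
    (hcont.mono (prod_mono le_rfl hsubA)) (fun x hx s hs => hB x hx s (hsubB hs))
    (fun x hx s hs => hC x hx s (hsubB hs)) (fun x hx s hs => hpt x hx s (hsubB hs))
    (hα T1 (hsubB ⟨hT01, le_rfl⟩)) (hβ T1 (hsubB ⟨hT01, le_rfl⟩))
  have hsI := hsubB hs
  have hst : s < t := hs.2.trans_lt hT1t
  have hξI : ξ ∈ Icc α β := ⟨hξ.1.le, hξ.2.le⟩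
  have hsol := hpt ξ hξ s hsI
  have hder : HasDerivAt (fun y => u y s) (deriv (fun y => u y s) ξ) ξ :=
    (hsol.1.differentiableAt (by simp)).hasDerivAt
  have hsl := hasDerivAt_iff_tendsto_slope_left_right.1 hder
  have hposs : ∀ x ∈ Icc α β, x < ξ → 0 < u x s := by
    intro x hx hxξ
    rcases lt_trichotomy (u x s) 0 with h | h | h
    · linarith [hN s hsI x hx h ξ hξI hxξ]
    · exfalso
      apply hξd
      have hz := hflat s hsI x hx ξ hξI h hξ0
      refine tendsto_nhds_unique hsl.1 (tendsto_const_nhds.congr' ?_)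
      filter_upwards [self_mem_nhdsWithin, nhdsWithin_le_nhds (Ioi_mem_nhds hxξ)] with y hy1 hy2
      have hy1' : y < ξ := hy1
      have hy2' : x < y := hy2
      rw [slope_def_field, hξ0, hz y ⟨hy2'.le, hy1'.le⟩]; simp
    · exact h
  have hnegs : ∀ x ∈ Icc α β, ξ < x → u x s < 0 := by
    intro x hx hxξ
    rcases lt_trichotomy (u x s) 0 with h | h | h
    · exact h
    · exfalso
      apply hξd
      have hz := hflat s hsI ξ hξI x hx hξ0 h
      refine tendsto_nhds_unique hsl.2 (tendsto_const_nhds.congr' ?_)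
      filter_upwards [self_mem_nhdsWithin, nhdsWithin_le_nhds (Iio_mem_nhds hxξ)] with y hy1 hy2
      have hy1' : ξ < y := hy1
      have hy2' : y < x := hy2
      rw [slope_def_field, hξ0, hz y ⟨hy1'.le, hy2'.le⟩]; simp
    · linarith [hP s hsI x hx h ξ hξI hxξ]
  have hdneg : deriv (fun y => u y s) ξ < 0 := by
    refine lt_of_le_of_ne ?_ hξd
    refine le_of_tendsto hsl.1 ?_
    filter_upwards [self_mem_nhdsWithin, nhdsWithin_le_nhds (Ioi_mem_nhds hξ.1)] with y hy1 hy2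
    have hy1' : y < ξ := hy1
    have hy2' : α < y := hy2
    rw [slope_def_field, hξ0, sub_zero]
    exact div_nonpos_of_nonneg_of_nonpos (hposs y ⟨hy2'.le, hy1'.le.trans hξI.2⟩ hy1').le
      (by linarith)
  obtain ⟨ε0, hε0, hinit⟩ := zn_init (fun y => u y s) α β ξ D z1 M hξ hDp hMp (hcx s hsI)
    hposs hnegs hsol.1 hdneg hw
  have hsub : Icc s t ⊆ Ioo Ta Tb := fun r hr => ⟨hsI.1.trans_le hr.1, hr.2.trans_lt ht.2⟩
  obtain ⟨ν1, hν1, hν1'⟩ := (isCompact_Icc (a := s) (b := t)).exists_forall_le'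
    (f := fun r => u α r) ((hct α ⟨le_rfl, hαβ.le⟩).mono hsub) (a := 0)
    (fun r hr => hα r (hsub hr))
  obtain ⟨ν2, hν2, hν2'⟩ := (isCompact_Icc (a := s) (b := t)).exists_forall_le'
    (f := fun r => -u β r) ((hct β ⟨hαβ.le, le_rfl⟩).mono hsub).neg (a := 0)
    (fun r hr => by linarith [hβ r (hsub hr)])
  obtain ⟨ε, hε, hεa, hεb, hεc⟩ : ∃ ε > 0, ε ≤ ε0 ∧ ε * (M + 1) ≤ ν1 ∧ ε * (M + 1) ≤ ν2 := by
    have hM1 : 0 < M + 1 := by linarith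
    refine ⟨min ε0 (min (ν1 / (M + 1)) (ν2 / (M + 1))), by positivity, min_le_left _ _, ?_, ?_⟩
    · rw [← le_div_iff₀ hM1]; exact (min_le_right _ _).trans (min_le_left _ _)
    · rw [← le_div_iff₀ hM1]; exact (min_le_right _ _).trans (min_le_right _ _)
  have hKts : ∀ r ∈ Icc s t, 0 ≤ Kc * (r - s) ∧ Kc * (r - s) ≤ 1 / 2 := by
    intro r hr
    refine ⟨mul_nonneg hKp.le (by linarith [hr.1]), ?_⟩
    have : Kc * (r - s) ≤ Kc * (t - T0) := by
      apply mul_le_mul_of_nonneg_left _ hKp.le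
      linarith [hr.2, hs.1]
    linarith
  set τ : ℕ → ℝ := fun i => if i = 0 then -1 else 1 with hτ
  have hτ0 : τ 0 = -1 := by simp [hτ]
  have hτ1 : τ 1 = 1 := by simp [hτ]
  set F : ℕ → ℝ → ℝ → ℝ := fun i x r =>
    τ i * u x r - ε * (τ i * (1 - D * (x - z1)) + Kc * (r - s)) with hF
  have key := zn_kp 2 F α β s t C0 hst.le ?_ ?_ ?_ ?_ ?_ ⟨fun i => if i = 0 then z1 else z2, ?_, ?_⟩
  · obtain ⟨y, hy1, hy2⟩ := key
    have a0 := hy1 0 (by norm_num)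
    have a1 := hy1 1 (by norm_num)
    have a2 := hy2 0 (by norm_num)
    simp only [hF, hτ0, hτ1] at a0 a1
    refine hinit ε hε hεa (y 0) a0.1 (y 1) a1.1 a2 ?_ ?_
    · have := a0.2
      simp only [sub_self, mul_zero] at this
      linarith
    · have := a1.2
      simp only [sub_self, mul_zero] at this
      linarith
  · intro i _
    have : ContinuousOn (fun p : ℝ × ℝ => u p.1 p.2) (Icc α β ×ˢ Icc s t) :=
      hcont.mono (prod_mono le_rfl hsub)
    exact (continuousOn_const.mul this).sub (by fun_prop)
  · intro i _ x hx r hr hp hmax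
    have hr' := hsub ⟨hr.1.le, hr.2⟩
    exact zn_H B c u x r s (τ i) ε D z1 Kc B0 C0 M (by
      simp only [hτ]; split_ifs <;> simp) hε hDp (hpt x hx r hr') (hB x hx r hr') (hC x hx r hr')
      hr.1.le (by rw [hKc]; linarith) hKp.le (by linarith [(hKts r ⟨hr.1.le, hr.2⟩).2])
      (hw x ⟨hx.1.le, hx.2.le⟩) hp hmax
  · intro i hi x hx r hr p0 p1
    have : i = 0 := by omega
    subst this
    simp only [hF, hτ0, hτ1, zero_add] at p0 p1
    have := mul_nonneg hε.le (hKts r hr).1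
    linarith
  · intro _ r hr
    simp only [hF, hτ0]
    have h3 := (abs_le.1 (hw α ⟨le_rfl, hαβ.le⟩)).2
    have h4 := hν1' r hr
    have h5 := (hKts r hr).1
    have := mul_le_mul_of_nonneg_left (show (1 - D * (α - z1)) - Kc * (r - s) ≤ M + 1 by linarith) hε.le
    linarith
  · intro _ r hr
    simp only [hF, hτ1, show 2 - 1 = 1 from rfl]
    have h3 := (abs_le.1 (hw β ⟨hαβ.le, le_rfl⟩)).1
    have h4 := hν2' r hr
    have h5 := (hKts r hr).1
    have := mul_le_mul_of_nonneg_left (show -(M + 1) ≤ (1 - D * (β - z1)) + Kc * (r - s) by linarith) hε.le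
    linarith
  · intro j hj
    have h5 := (hKts t ⟨hst.le, le_rfl⟩).2
    rcases (show j = 0 ∨ j = 1 by omega) with rfl | rfl
    · refine ⟨by simpa using hz1, ?_⟩
      simp only [hF, hτ0, if_true, h1, sub_self]
      have := mul_pos hε (show 0 < 1 - Kc * (t - s) by linarith)
      linarith
    · refine ⟨by simpa using hz2, ?_⟩
      simp only [hF, hτ1, one_ne_zero, if_false, h2, hDz]
      have := mul_pos hε (show 0 < 1 - Kc * (t - s) by linarith)
      linarith
  · intro j hj
    have : j = 0 := by omega
    subst this
    simpa using h12

theorem zn_pde (m : ℕ) (R t1 t2 : ℝ) (b v : ℝ → ℝ → ℝ)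
    (hv_smooth : ContDiffOn ℝ (⊤ : ℕ∞) (fun p : ℝ × ℝ => v p.1 p.2) (Icc 0 R ×ˢ Ioo t1 t2))
    (hpde : ∀ r ∈ Ioo (0:ℝ) R, ∀ t ∈ Ioo t1 t2,
      deriv (fun s => v r s) t =
        deriv (deriv (fun x => v x t)) r + (((m : ℝ) - 1) / r) * deriv (fun x => v x t) r
          - (b r t / r ^ 2) * v r t) :
    ∀ r ∈ Ioo (0:ℝ) R, ∀ t ∈ Ioo t1 t2,
      ZNSol (fun r _ => ((m : ℝ) - 1) / r) (fun r t => - (b r t / r ^ 2)) v r t := by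
  intro r hr t ht
  have hn : Icc 0 R ×ˢ Ioo t1 t2 ∈ nhds (r, t) :=
    prod_mem_nhds (Icc_mem_nhds hr.1 hr.2) (Ioo_mem_nhds ht.1 ht.2)
  have hc := hv_smooth.contDiffAt hn
  have hx : ContDiffAt ℝ (⊤ : ℕ∞) (fun y => v y t) r :=
    ContDiffAt.comp (f := fun y : ℝ => (y, t)) r hc (by fun_prop)
  have hs : ContDiffAt ℝ (⊤ : ℕ∞) (fun s => v r s) t :=
    ContDiffAt.comp (f := fun s : ℝ => (r, s)) t hc (by fun_prop)
  refine ⟨hx.of_le (WithTop.coe_le_coe.2 (le_top (a := (2 : ℕ∞)))), ?_⟩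
  have := (hs.differentiableAt (by simp)).hasDerivAt
  rw [hpde r hr t ht] at this
  exact this.congr_deriv (by ring)

theorem zn_v0 (m : ℕ) (hm : 2 ≤ m) (R t1 t2 : ℝ) (hR : 0 < R) (b v : ℝ → ℝ → ℝ)
    (hb_smooth : ContDiffOn ℝ (⊤ : ℕ∞) (fun p : ℝ × ℝ => b p.1 p.2) (Icc 0 R ×ˢ Ioo t1 t2))
    (hb0 : ∀ t ∈ Ioo t1 t2, b 0 t = (m : ℝ) - 1)
    (hv_smooth : ContDiffOn ℝ (⊤ : ℕ∞) (fun p : ℝ × ℝ => v p.1 p.2) (Icc 0 R ×ˢ Ioo t1 t2))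
    (hpde : ∀ r ∈ Ioo (0:ℝ) R, ∀ t ∈ Ioo t1 t2,
      deriv (fun s => v r s) t =
        deriv (deriv (fun x => v x t)) r + (((m : ℝ) - 1) / r) * deriv (fun x => v x t) r
          - (b r t / r ^ 2) * v r t) :
    ∀ t ∈ Ioo t1 t2, v 0 t = 0 := by
  intro t ht
  have hmap : MapsTo (fun y : ℝ => (y, t)) (Icc 0 R) (Icc 0 R ×ˢ Ioo t1 t2) := fun y hy => ⟨hy, ht⟩
  have hU : UniqueDiffOn ℝ (Icc 0 R) := uniqueDiffOn_Icc hR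
  have hf : ContDiffOn ℝ (⊤ : ℕ∞) (fun y => v y t) (Icc 0 R) :=
    hv_smooth.comp (f := fun y : ℝ => (y, t)) (by fun_prop) hmap
  have hbc : ContinuousOn (fun y => b y t) (Icc 0 R) :=
    hb_smooth.continuousOn.comp (f := fun y : ℝ => (y, t)) (by fun_prop) hmap
  set g := derivWithin (fun y => v y t) (Icc 0 R) with hg
  have hg1 : ContDiffOn ℝ 1 g (Icc 0 R) := hf.derivWithin hU (WithTop.coe_le_coe.2 (le_top (a := (1 + 1 : ℕ∞))))
  have hg2 : ContinuousOn (derivWithin g (Icc 0 R)) (Icc 0 R) :=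
    hg1.continuousOn_derivWithin hU le_rfl
  set S := Icc 0 R ×ˢ Ioo t1 t2 with hS
  have hUS : UniqueDiffOn ℝ S := hU.prod (isOpen_Ioo.uniqueDiffOn)
  have hA0 : ContinuousOn (fderivWithin ℝ (fun p : ℝ × ℝ => v p.1 p.2) S) S :=
    hv_smooth.continuousOn_fderivWithin hUS (by simp)
  have hA : ContinuousOn (fun y => fderivWithin ℝ (fun p : ℝ × ℝ => v p.1 p.2) S (y, t) (0, 1))
      (Icc 0 R) :=
    (hA0.comp (f := fun y : ℝ => (y, t)) (by fun_prop) hmap).clm_apply continuousOn_const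
  have key : EqOn (fun r => r ^ 2 * fderivWithin ℝ (fun p : ℝ × ℝ => v p.1 p.2) S (r, t) (0, 1)
      - r ^ 2 * derivWithin g (Icc 0 R) r - ((m : ℝ) - 1) * r * g r + b r t * v r t)
      (fun _ => 0) (Icc 0 R) := by
    have hcl : Icc 0 R ⊆ closure (Ioo 0 R) := by rw [closure_Ioo hR.ne]
    refine EqOn.of_subset_closure ?_ ?_ continuousOn_const Ioo_subset_Icc_self hcl
    · intro r hr
      have hn : S ∈ nhds (r, t) :=
        prod_mem_nhds (Icc_mem_nhds hr.1 hr.2) (Ioo_mem_nhds ht.1 ht.2)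
      have hn1 : Icc 0 R ∈ nhds r := Icc_mem_nhds hr.1 hr.2
      have e1 : g r = deriv (fun y => v y t) r := derivWithin_of_mem_nhds hn1
      have e2 : derivWithin g (Icc 0 R) r = deriv (deriv (fun y => v y t)) r := by
        rw [derivWithin_of_mem_nhds hn1]
        apply Filter.EventuallyEq.deriv_eq
        filter_upwards [Ioo_mem_nhds hr.1 hr.2] with y hy
        exact derivWithin_of_mem_nhds (Icc_mem_nhds hy.1 hy.2)
      have e3 : fderivWithin ℝ (fun p : ℝ × ℝ => v p.1 p.2) S (r, t) (0, 1)
          = deriv (fun s => v r s) t := by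
        rw [fderivWithin_of_mem_nhds hn]
        have h1 : HasFDerivAt (fun p : ℝ × ℝ => v p.1 p.2) _ (r, t) :=
          ((hv_smooth.contDiffAt hn).differentiableAt (by simp)).hasFDerivAt
        have h2 : HasDerivAt (fun s : ℝ => (r, s)) (0, 1) t :=
          (hasDerivAt_const t r).prodMk (hasDerivAt_id t)
        exact (h1.comp_hasDerivAt t h2).deriv.symm
      have hr0 : r ≠ 0 := hr.1.ne'
      simp only [e1, e2, e3, hpde r hr t ht]
      field_simp
      ring
    · have hgc := hg1.continuousOn
      have hvc := hf.continuousOn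
      fun_prop
  have h0 := key (left_mem_Icc.2 hR.le)
  simp only [hb0 t ht] at h0
  have hm' : (2:ℝ) ≤ m := by exact_mod_cast hm
  have : ((m:ℝ) - 1) * v 0 t = 0 := by
    norm_num at h0 ⊢
    exact h0
  rcases mul_eq_zero.1 this with h | h
  · linarith
  · exact h

theorem zn_cbd (m : ℕ) (hm : 2 ≤ m) (R t1 t2 : ℝ) (b : ℝ → ℝ → ℝ)
    (hb_smooth : ContDiffOn ℝ (⊤ : ℕ∞) (fun p : ℝ × ℝ => b p.1 p.2) (Icc 0 R ×ˢ Ioo t1 t2))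
    (hb_bdd : ∃ C : ℝ, ∀ r ∈ Icc (0:ℝ) R, ∀ t ∈ Ioo t1 t2, |b r t| ≤ C)
    (hb_deriv_bdd : ∃ C : ℝ, ∀ r ∈ Icc (0:ℝ) R, ∀ t ∈ Ioo t1 t2,
      |deriv (fun x => b x t) r| ≤ C ∧ |deriv (fun s => b r s) t| ≤ C)
    (hb0 : ∀ t ∈ Ioo t1 t2, b 0 t = (m : ℝ) - 1) :
    ∃ C : ℝ, ∀ r ∈ Ioo (0:ℝ) R, ∀ t ∈ Ioo t1 t2, - (b r t / r ^ 2) ≤ C := by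
  obtain ⟨C1, hC1⟩ := hb_bdd
  obtain ⟨C2, hC2⟩ := hb_deriv_bdd
  have hm' : (2:ℝ) ≤ m := by exact_mod_cast hm
  set D := |C2| + 1 with hD
  have hDp : 0 < D := by positivity
  refine ⟨|C1| * D ^ 2, fun r hr t ht => ?_⟩
  have hr2 : 0 < r ^ 2 := pow_pos hr.1 2
  by_cases hrD : r * D ≤ 1
  · have hc : ContinuousOn (fun y => b y t) (Icc 0 r) :=
      hb_smooth.continuousOn.comp (f := fun y : ℝ => (y, t)) (by fun_prop)
        (fun y hy => ⟨⟨hy.1, hy.2.trans hr.2.le⟩, ht⟩)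
    have hd : DifferentiableOn ℝ (fun y => b y t) (Ioo 0 r) := by
      intro y hy
      have hyR : y < R := hy.2.trans hr.2
      have hn : Icc 0 R ×ˢ Ioo t1 t2 ∈ nhds (y, t) :=
        prod_mem_nhds (Icc_mem_nhds hy.1 hyR) (Ioo_mem_nhds ht.1 ht.2)
      have : ContDiffAt ℝ (⊤ : ℕ∞) (fun y => b y t) y :=
        ContDiffAt.comp (f := fun y : ℝ => (y, t)) y (hb_smooth.contDiffAt hn) (by fun_prop)
      exact (this.differentiableAt (by simp)).differentiableWithinAt
    obtain ⟨ξ, hξ, he⟩ := exists_deriv_eq_slope (fun y => b y t) hr.1 hc hd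
    have h1 := (hC2 ξ ⟨hξ.1.le, (hξ.2.trans hr.2).le⟩ t ht).1
    rw [he, hb0 t ht, sub_zero, abs_div, abs_of_pos hr.1, div_le_iff₀ hr.1] at h1
    have h2 : C2 * r ≤ 1 := by
      have : C2 ≤ D := by rw [hD]; linarith [le_abs_self C2]
      nlinarith [hr.1]
    have h3 := (abs_le.1 (h1.trans h2)).1
    have h4 : 0 ≤ b r t := by linarith
    have : 0 ≤ b r t / r ^ 2 := by positivity
    have : 0 ≤ |C1| * D ^ 2 := by positivity
    linarith
  · push Not at hrD
    have h1 := hC1 r ⟨hr.1.le, hr.2.le⟩ t ht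
    have h2 : -b r t ≤ |C1| := ((neg_le_abs _).trans h1).trans (le_abs_self _)
    rw [← neg_div, div_le_iff₀ hr2]
    have h3 : 1 ≤ (r * D) ^ 2 := one_le_pow₀ hrD.le
    nlinarith [abs_nonneg C1]

def ZNAltC (v : ℝ → ℝ → ℝ) (R : ℝ) (K : ℕ) (σ t : ℝ) (x : ℕ → ℝ) : Prop :=
  ZNChain (fun j x t => σ * (-1) ^ j * v x t) K 0 R t x

theorem zn_mk (v : ℝ → ℝ → ℝ) (R : ℝ) (K : ℕ) (σ t : ℝ) (x : ℕ → ℝ)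
    (h1 : ∀ j < K, x j ∈ Icc 0 R ∧ 0 < σ * (-1) ^ j * v (x j) t)
    (h2 : ∀ j, j + 1 < K → x j ≤ x (j + 1)) : ZNAltC v R K σ t x := by
  refine ⟨h1, fun j hj => lt_of_le_of_ne (h2 j hj) ?_⟩
  intro he
  have a := (h1 j (by omega)).2
  have b := (h1 (j + 1) hj).2
  rw [← he, pow_succ] at b
  linarith

theorem zn_drop (v : ℝ → ℝ → ℝ) (R : ℝ) (K L : ℕ) (hL : L ≤ K) (σ t : ℝ) (x : ℕ → ℝ)
    (h : ZNAltC v R K σ t x) : ZNAltC v R L σ t x :=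
  ⟨fun j hj => h.1 j (by omega), fun j hj => h.2 j (by omega)⟩

theorem zn_append (v : ℝ → ℝ → ℝ) (R : ℝ) (K : ℕ) (σ t : ℝ) (x : ℕ → ℝ) (z : ℝ)
    (h : ZNAltC v R K σ t x) (hz : z ∈ Icc 0 R) (hp : 0 < σ * (-1) ^ K * v z t)
    (hle : ∀ j, j + 1 = K → x j ≤ z) : ∃ y, ZNAltC v R (K + 1) σ t y := by
  refine ⟨fun j => if j < K then x j else z, zn_mk _ _ _ _ _ _ ?_ ?_⟩
  · intro j hj
    by_cases hjK : j < K
    · simp only [hjK, if_true]; exact h.1 j hjK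
    · obtain rfl : j = K := by omega
      simp only [hjK, if_false]; exact ⟨hz, hp⟩
  · intro j hj
    have hjK : j < K := by omega
    by_cases hjK' : j + 1 < K
    · simp only [hjK, hjK', if_true]; exact (h.2 j hjK').le
    · simp only [hjK, hjK', if_true, if_false]; exact hle j (by omega)

theorem zn_prepend (v : ℝ → ℝ → ℝ) (R : ℝ) (K : ℕ) (σ t : ℝ) (x : ℕ → ℝ) (z : ℝ)
    (h : ZNAltC v R K σ t x) (hz : z ∈ Icc 0 R) (hp : σ * v z t < 0)
    (hle : z ≤ x 0) : ∃ y, ZNAltC v R (K + 1) (-σ) t y := by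
  refine ⟨fun j => if j = 0 then z else x (j - 1), zn_mk _ _ _ _ _ _ ?_ ?_⟩
  · intro j hj
    rcases j with _ | j
    · simp only [if_true, pow_zero]; exact ⟨hz, by linarith⟩
    · have := h.1 j (by omega)
      simp only [Nat.succ_ne_zero, if_false, Nat.add_sub_cancel, pow_succ]
      exact ⟨this.1, by linarith [this.2]⟩
  · intro j hj
    rcases j with _ | j
    · simpa using hle
    · have := h.2 j (by omega)
      simpa using this.le

theorem zn_insert (v : ℝ → ℝ → ℝ) (R : ℝ) (K : ℕ) (σ t : ℝ) (x : ℕ → ℝ) (y z : ℝ) (i : ℕ)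
    (h : ZNAltC v R K σ t x) (hi : i + 1 < K) (hy : x i ≤ y) (hyz : y ≤ z) (hz : z ≤ x (i + 1))
    (hp : σ * (-1) ^ i * v y t < 0) (hq : 0 < σ * (-1) ^ i * v z t) :
    ∃ y, ZNAltC v R (K + 2) σ t y := by
  have hI0 := (h.1 i (by omega)).1
  have hI1 := (h.1 (i + 1) (by omega)).1
  refine ⟨fun j => if j ≤ i then x j else if j = i + 1 then y else if j = i + 2 then z else x (j - 2),
    zn_mk _ _ _ _ _ _ ?_ ?_⟩
  · intro j hj
    by_cases h1 : j ≤ i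
    · simp only [h1, if_true]; exact h.1 j (by omega)
    by_cases h2 : j = i + 1
    · subst h2
      simp only [h1, if_true, if_false, pow_succ]
      exact ⟨⟨hI0.1.trans hy, (hyz.trans hz).trans hI1.2⟩, by linarith⟩
    by_cases h3 : j = i + 2
    · subst h3
      simp only [h1, h2, if_true, if_false, pow_add]
      exact ⟨⟨(hI0.1.trans hy).trans hyz, hz.trans hI1.2⟩, by linarith⟩
    · simp only [h1, h2, h3, if_false]
      have := h.1 (j - 2) (by omega)
      refine ⟨this.1, ?_⟩
      have e : (-1 : ℝ) ^ j = (-1) ^ (j - 2) := by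
        conv_lhs => rw [show j = (j - 2) + 2 by omega]
        rw [pow_add]; norm_num
      rw [e]; exact this.2
  · intro j hj
    by_cases h1 : j + 1 ≤ i
    · have h1' : j ≤ i := by omega
      simp only [h1, h1', if_true]; exact (h.2 j (by omega)).le
    by_cases h2 : j = i
    · subst h2
      simp only [h1, le_refl, if_true, if_false]; exact hy
    by_cases h3 : j = i + 1
    · subst h3
      have e1 : ¬ (i + 1 ≤ i) := by omega
      have e2 : ¬ (i + 1 + 1 ≤ i) := by omega
      have e3 : ¬ (i + 1 + 1 = i + 1) := by omega
      have e4 : (i + 1 + 1 = i + 2) := by omega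
      simp only [e1, e2, e3, e4, if_true, if_false]; exact hyz
    have a1 : ¬ (j ≤ i) := by omega
    have a2 : ¬ (j + 1 = i + 1) := by omega
    have a3 : ¬ (j + 1 = i + 2) := by omega
    by_cases h4 : j = i + 2
    · subst h4
      have e1 : ¬ (i + 2 = i + 1) := by omega
      have e2 : i + 2 + 1 - 2 = i + 1 := by omega
      simp only [h1, a1, a2, a3, e1, e2, if_true, if_false]; exact hz
    · simp only [h1, a1, a2, a3, h3, h4, if_false]
      have := h.2 (j - 2) (by omega)
      rw [show j - 2 + 1 = j + 1 - 2 by omega] at this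
      exact this.le

theorem zn_alt_core (v B c : ℝ → ℝ → ℝ) (R t1 t2 C : ℝ)
    (hcont : ContinuousOn (fun p : ℝ × ℝ => v p.1 p.2) (Icc 0 R ×ˢ Ioo t1 t2))
    (hsol : ∀ x ∈ Ioo 0 R, ∀ t ∈ Ioo t1 t2, ZNSol B c v x t)
    (hc : ∀ x ∈ Ioo 0 R, ∀ t ∈ Ioo t1 t2, c x t ≤ C)
    (h0 : ∀ t ∈ Ioo t1 t2, v 0 t = 0) (K : ℕ) (σ s t : ℝ) (hs : t1 < s) (hst : s ≤ t) (ht : t < t2)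
    (hβ : 0 < K → ∀ r ∈ Icc s t, σ * (-1) ^ (K - 1) * v R r ≤ 0)
    (hx : ∃ x, ZNAltC v R K σ t x) : ∃ y, ZNAltC v R K σ s y := by
  have hsub : ∀ r ∈ Icc s t, r ∈ Ioo t1 t2 := fun r hr => ⟨hs.trans_le hr.1, hr.2.trans_lt ht⟩
  refine zn_kp K (fun j x t => σ * (-1) ^ j * v x t) 0 R s t C hst ?_ ?_ ?_ ?_ hβ hx
  · intro i _
    exact continuousOn_const.mul (hcont.mono (prod_mono_right hsub))
  · intro i _ x hx r hr hpos hmax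
    have hr' := hsub r ⟨hr.1.le, hr.2⟩
    have h1 := zn_sol_smul B c v x r (σ * (-1) ^ i) (hsol x hx r hr')
    refine ⟨_, h1.2, ?_⟩
    obtain ⟨h2, h3⟩ := zn_second _ x hmax h1.1
    rw [h2]
    have := mul_le_mul_of_nonneg_right (hc x hx r hr') hpos.le
    linarith
  · intro i _ x _ r _ h1 h2
    simp only [pow_succ] at h2
    linarith
  · intro _ r hr
    simp only [h0 r (hsub r hr)]
    simp

theorem zn_alt_mono (v B c : ℝ → ℝ → ℝ) (R t1 t2 C : ℝ) (hR : 0 < R)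
    (hcont : ContinuousOn (fun p : ℝ × ℝ => v p.1 p.2) (Icc 0 R ×ˢ Ioo t1 t2))
    (hsol : ∀ x ∈ Ioo 0 R, ∀ t ∈ Ioo t1 t2, ZNSol B c v x t)
    (hc : ∀ x ∈ Ioo 0 R, ∀ t ∈ Ioo t1 t2, c x t ≤ C)
    (h0 : ∀ t ∈ Ioo t1 t2, v 0 t = 0)
    (hbcR : (∀ t ∈ Ioo t1 t2, v R t = 0) ∨ (∀ t ∈ Ioo t1 t2, v R t ≠ 0))
    (K : ℕ) (σ s t : ℝ) (hσ : σ = 1 ∨ σ = -1) (hs : t1 < s) (hst : s ≤ t) (ht : t < t2)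
    (hx : ∃ x, ZNAltC v R K σ t x) : ∃ y, ZNAltC v R K σ s y := by
  have hsub : ∀ r ∈ Icc s t, r ∈ Ioo t1 t2 := fun r hr => ⟨hs.trans_le hr.1, hr.2.trans_lt ht⟩
  have hcore := zn_alt_core v B c R t1 t2 C hcont hsol hc h0
  rcases hbcR with hbcR | hbcR
  · exact hcore K σ s t hs hst ht (fun _ r hr => by rw [hbcR r (hsub r hr)]; simp) hx
  have hcR : ContinuousOn (fun r => v R r) (Ioo t1 t2) :=
    hcont.comp (f := fun r : ℝ => (R, r)) (by fun_prop) (fun r hr => ⟨⟨hR.le, le_rfl⟩, hr⟩)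
  have hsign : ∀ w : ℝ, ∀ a ∈ Ioo t1 t2, ∀ b ∈ Ioo t1 t2, w ≠ 0 → 0 < w * v R a → 0 < w * v R b := by
    intro w a ha b hb hw h1
    by_contra h2
    push Not at h2
    obtain ⟨r, hr, hr2⟩ := isPreconnected_Ioo.intermediate_value hb ha
      (continuousOn_const (c := w) |>.mul hcR) (show (0:ℝ) ∈ Icc _ _ from ⟨h2, h1.le⟩)
    rcases mul_eq_zero.1 hr2 with h | h
    · exact hw h
    · exact hbcR r hr h
  have hw : ∀ n : ℕ, σ * (-1) ^ n ≠ 0 := fun n => by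
    apply mul_ne_zero
    · rcases hσ with h | h <;> rw [h] <;> norm_num
    · exact pow_ne_zero _ (by norm_num)
  rcases K with _ | n
  · exact hcore 0 σ s t hs hst ht (fun h => absurd h (lt_irrefl _)) hx
  by_cases hpos : 0 < σ * (-1) ^ n * v R s
  · obtain ⟨x, hx⟩ := hx
    have hpos' : ∀ r ∈ Icc s t, 0 < σ * (-1) ^ n * v R r := fun r hr =>
      hsign _ s (hsub s ⟨le_rfl, hst⟩) r (hsub r hr) (hw n) hpos
    obtain ⟨y, hy⟩ := hcore n σ s t hs hst ht (by
      intro hn r hr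
      have := hpos' r hr
      obtain ⟨k, rfl⟩ : ∃ k, n = k + 1 := ⟨n - 1, by omega⟩
      rw [pow_succ] at this
      simp only [Nat.add_sub_cancel]
      linarith) ⟨x, zn_drop v R (n + 1) n (by omega) σ t x hx⟩
    exact zn_append v R n σ s y R hy ⟨hR.le, le_rfl⟩ hpos
      (fun j hj => (hy.1 j (by omega)).1.2)
  · refine hcore (n + 1) σ s t hs hst ht ?_ hx
    intro _ r hr
    by_contra h
    push Not at h
    exact hpos (hsign _ r (hsub r hr) s (hsub s ⟨le_rfl, hst⟩) (hw n) h)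

theorem zn_loc (K : ℕ) (x : ℕ → ℝ) (r : ℝ) (h0 : x 0 ≤ r) (h1 : r ≤ x K) (hK : x 0 < x K) :
    ∃ j < K, x j ≤ r ∧ r ≤ x (j + 1) := by
  induction K with
  | zero => exact absurd hK (lt_irrefl _)
  | succ n ih =>
    by_cases h : x n ≤ r
    · exact ⟨n, by omega, h, h1⟩
    · push Not at h
      obtain ⟨j, hj, hh⟩ := ih h.le (h0.trans_lt h)
      exact ⟨j, by omega, hh⟩

theorem zn_count (v B c : ℝ → ℝ → ℝ) (R t1 t2 : ℝ) (hR : 0 < R)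
    (hcont : ContinuousOn (fun p : ℝ × ℝ => v p.1 p.2) (Icc 0 R ×ˢ Ioo t1 t2))
    (hsol : ∀ x ∈ Ioo 0 R, ∀ t ∈ Ioo t1 t2, ZNSol B c v x t)
    (hB : ∀ p : ℝ, 0 < p → ∃ B0, 0 ≤ B0 ∧ ∀ x ∈ Ioo p R, ∀ t ∈ Ioo t1 t2, |B x t| ≤ B0)
    (hC : ∀ p : ℝ, 0 < p → ∃ C0, 0 ≤ C0 ∧ ∀ x ∈ Ioo p R, ∀ t ∈ Ioo t1 t2, |c x t| ≤ C0)
    (h0 : ∀ t ∈ Ioo t1 t2, v 0 t = 0)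
    (Ta Tb : ℝ) (hTa : t1 ≤ Ta) (hTb : Tb ≤ t2) (K : ℕ) (σ t : ℝ) (hσ : σ = 1 ∨ σ = -1)
    (ht : t ∈ Ioo Ta Tb) (x : ℕ → ℝ) (hx : ZNAltC v R (K + 1) σ t x)
    (hno : ∀ s ∈ Ioo Ta Tb, ∀ τ : ℝ, τ = 1 ∨ τ = -1 → ¬ ∃ y, ZNAltC v R (K + 2) τ s y) :
    (v R t = 0 → {r ∈ Icc (0:ℝ) R | v r t = 0}.ncard = K + 2) ∧
    (v R t ≠ 0 → {r ∈ Icc (0:ℝ) R | v r t = 0}.ncard = K + 1) := by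
  have htt : t ∈ Ioo t1 t2 := ⟨hTa.trans_lt ht.1, ht.2.trans_le hTb⟩
  have hσ0 : σ ≠ 0 := by rcases hσ with h | h <;> rw [h] <;> norm_num
  have hw : ∀ n : ℕ, σ * (-1) ^ n ≠ 0 := fun n => mul_ne_zero hσ0 (pow_ne_zero _ (by norm_num))
  have hxI : ∀ j < K + 1, x j ∈ Icc 0 R := fun j hj => (hx.1 j hj).1
  have hev : ∀ᶠ s in nhds t, ∀ j ∈ Finset.range (K + 1), 0 < σ * (-1) ^ j * v (x j) s := by
    rw [Filter.eventually_all_finset]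
    intro j hj
    have hj := Finset.mem_range.1 hj
    have hcj : ContinuousOn (fun s => v (x j) s) (Ioo t1 t2) :=
      hcont.comp (f := fun s : ℝ => (x j, s)) (by fun_prop) (fun s hs => ⟨hxI j hj, hs⟩)
    have hct := (hcj.continuousAt (Ioo_mem_nhds htt.1 htt.2)).const_mul (σ * (-1) ^ j)
    exact hct.eventually (lt_mem_nhds (hx.1 j hj).2)
  obtain ⟨l, u, htl, hlu⟩ := mem_nhds_iff_exists_Ioo_subset.1
    (hev.and (Ioo_mem_nhds ht.1 ht.2))
  have hsT : ∀ s ∈ Ioo l u, s ∈ Ioo Ta Tb := fun s hs => (hlu hs).2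
  have hst : ∀ s ∈ Ioo l u, s ∈ Ioo t1 t2 := fun s hs =>
    ⟨hTa.trans_lt (hsT s hs).1, (hsT s hs).2.trans_le hTb⟩
  have hxs : ∀ s ∈ Ioo l u, ZNAltC v R (K + 1) σ s x := fun s hs =>
    ⟨fun j hj => ⟨hxI j hj, (hlu hs).1 j (Finset.mem_range.2 hj)⟩, hx.2⟩
  have hne : ∀ j < K + 1, v (x j) t ≠ 0 := by
    intro j hj h
    have := (hx.1 j hj).2
    simp [h] at this
  have hlt := zn_chain_lt (K + 1) x hx.2
  have hle := zn_chain_le (K + 1) x (fun j hj => (hx.2 j hj).le)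
  have hx0 : 0 < x 0 := lt_of_le_of_ne (hxI 0 (by omega)).1
    (fun h => hne 0 (by omega) (by rw [← h]; exact h0 t htt))
  have hσn : -σ = 1 ∨ -σ = -1 := by
    rcases hσ with h | h <;> rw [h] <;> norm_num
  have hL : ∀ s ∈ Ioo l u, ∀ y ∈ Icc 0 (x 0), 0 ≤ σ * v y s := by
    intro s hs y hy
    by_contra h
    push Not at h
    exact hno s (hsT s hs) (-σ) hσn (zn_prepend v R (K + 1) σ s x y (hxs s hs)
      ⟨hy.1, hy.2.trans (hxI 0 (by omega)).2⟩ h hy.2)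
  have hRr : ∀ s ∈ Ioo l u, ∀ y ∈ Icc (x K) R, 0 ≤ σ * (-1) ^ K * v y s := by
    intro s hs y hy
    by_contra h
    push Not at h
    refine hno s (hsT s hs) σ hσ (zn_append v R (K + 1) σ s x y (hxs s hs)
      ⟨(hxI K (by omega)).1.trans hy.1, hy.2⟩ (by rw [pow_succ]; linarith) ?_)
    intro j hj
    obtain rfl : j = K := by omega
    exact hy.1
  have hM : ∀ j < K, ∀ s ∈ Ioo l u, ∀ y ∈ Icc (x j) (x (j + 1)), ∀ z ∈ Icc (x j) (x (j + 1)),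
      y < z → σ * (-1) ^ j * v y s < 0 → 0 < σ * (-1) ^ j * v z s → False := by
    intro j hj s hs y hy z hz hyz h1 h2
    obtain ⟨Y, hY⟩ := zn_insert v R (K + 1) σ s x y z j (hxs s hs) (by omega) hy.1 hyz.le hz.2 h1 h2
    exact hno s (hsT s hs) σ hσ ⟨Y, zn_drop v R _ _ (by omega) σ s Y hY⟩
  obtain ⟨T0, hT0⟩ := exists_between htl.1
  have hTsub : ∀ s ∈ Icc T0 t, s ∈ Ioo l u := fun s hs => ⟨hT0.1.trans_le hs.1, hs.2.trans_lt htl.2⟩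
  have zL : ∀ r, 0 < r → r ≤ x 0 → v r t ≠ 0 := by
    intro r hr hr2 hz
    rcases hr2.eq_or_lt with h | h
    · exact hne 0 (by omega) (h ▸ hz)
    obtain ⟨B0, hB0, hBb⟩ := hB (r / 2) (by linarith)
    obtain ⟨C0, hC0, hCb⟩ := hC (r / 2) (by linarith)
    have hxR := (hxI 0 (by omega)).2
    have := zn_smp B c (fun y s => σ * v y s) (r / 2) (x 0) T0 t B0 C0 1 r (Or.inl rfl) hT0.2
      ⟨by linarith, h⟩ hB0 hC0
      (continuousOn_const.mul (hcont.mono (prod_mono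
        (fun y hy => ⟨by linarith [hy.1], hy.2.trans hxR⟩) (fun s hs => hst s (hTsub s hs)))))
      (fun y hy s hs => hL s (hTsub s hs) y ⟨by linarith [hy.1], hy.2⟩)
      (fun y hy s hs => hBb y ⟨hy.1, hy.2.trans_le hxR⟩ s (hst s (hTsub s ⟨hs.1.le, hs.2⟩)))
      (fun y hy s hs => hCb y ⟨hy.1, hy.2.trans_le hxR⟩ s (hst s (hTsub s ⟨hs.1.le, hs.2⟩)))
      (fun y hy s hs => Or.inr (zn_sol_smul B c v y s σ (hsol y
        ⟨by linarith [hy.1], hy.2.trans_le hxR⟩ s (hst s (hTsub s ⟨hs.1.le, hs.2⟩)))))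
      (fun _ => by simpa using (hx.1 0 (by omega)).2) (fun h => by norm_num at h)
    simp [hz] at this
  have hxpos : ∀ j < K + 1, 0 < x j := fun j hj => hx0.trans_le (hle j 0 (by omega) hj)
  have zR : ∀ r, x K ≤ r → r < R → v r t ≠ 0 := by
    intro r hr hr2 hz
    rcases hr.eq_or_lt with h | h
    · exact hne K (by omega) (h ▸ hz)
    have hxp := hxpos K (by omega)
    obtain ⟨B0, hB0, hBb⟩ := hB (x K) hxp
    obtain ⟨C0, hC0, hCb⟩ := hC (x K) hxp
    have := zn_smp B c (fun y s => σ * (-1) ^ K * v y s) (x K) R T0 t B0 C0 (-1) r (Or.inr rfl) hT0.2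
      ⟨h, hr2⟩ hB0 hC0
      (continuousOn_const.mul (hcont.mono (prod_mono
        (fun y hy => ⟨hxp.le.trans hy.1, hy.2⟩) (fun s hs => hst s (hTsub s hs)))))
      (fun y hy s hs => hRr s (hTsub s hs) y hy)
      (fun y hy s hs => hBb y hy s (hst s (hTsub s ⟨hs.1.le, hs.2⟩)))
      (fun y hy s hs => hCb y hy s (hst s (hTsub s ⟨hs.1.le, hs.2⟩)))
      (fun y hy s hs => Or.inr (zn_sol_smul B c v y s _ (hsol y
        ⟨hxp.trans hy.1, hy.2⟩ s (hst s (hTsub s ⟨hs.1.le, hs.2⟩)))))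
      (fun h => by norm_num at h) (fun _ => (hx.1 K (by omega)).2)
    simp [hz] at this
  have zM : ∀ j < K, ∃ z, (z ∈ Icc (x j) (x (j + 1)) ∧ v z t = 0) ∧
      ∀ y, y ∈ Icc (x j) (x (j + 1)) → v y t = 0 → y = z := by
    intro j hj
    have hxp := hxpos j (by omega)
    have hxR := (hxI (j + 1) (by omega)).2
    obtain ⟨B0, hB0, hBb⟩ := hB (x j) hxp
    obtain ⟨C0, hC0, hCb⟩ := hC (x j) hxp
    obtain ⟨z, ⟨hz1, hz2⟩, hz3⟩ := zn_mid B c (fun y s => σ * (-1) ^ j * v y s) (x j) (x (j + 1)) l u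
      B0 C0 (hx.2 j (by omega)) hB0 hC0
      (continuousOn_const.mul (hcont.mono (prod_mono
        (fun y hy => ⟨hxp.le.trans hy.1, hy.2.trans hxR⟩) hst)))
      (fun y hy s hs => hBb y ⟨hy.1, hy.2.trans_le hxR⟩ s (hst s hs))
      (fun y hy s hs => hCb y ⟨hy.1, hy.2.trans_le hxR⟩ s (hst s hs))
      (fun y hy s hs => zn_sol_smul B c v y s _ (hsol y
        ⟨hxp.trans hy.1, hy.2.trans_le hxR⟩ s (hst s hs)))
      (fun s hs => ((hxs s hs).1 j (by omega)).2)
      (fun s hs => by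
        have := ((hxs s hs).1 (j + 1) (by omega)).2
        simp only [pow_succ] at this
        linarith)
      (hM j hj) t htl
    refine ⟨z, ⟨hz1, (mul_eq_zero.1 hz2).resolve_left (hw j)⟩, fun y hy hy2 => hz3 y ⟨hy, ?_⟩⟩
    simp only [hy2, mul_zero]
  choose! ζ hζ1 hζ2 using zM
  have hζl : ∀ j < K, x j < ζ j := fun j hj => lt_of_le_of_ne (hζ1 j hj).1.1
    (fun h => hne j (by omega) (h ▸ (hζ1 j hj).2))
  have hζr : ∀ j < K, ζ j < x (j + 1) := fun j hj => lt_of_le_of_ne (hζ1 j hj).1.2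
    (fun h => hne (j + 1) (by omega) (h ▸ (hζ1 j hj).2))
  set Z : Set ℝ := ζ '' (↑(Finset.range K)) with hZ
  have hZc : Z.ncard = K := by
    rw [hZ, InjOn.ncard_image, ncard_coe_finset, Finset.card_range]
    have hmono : ∀ i j, i < j → j < K → ζ i < ζ j := fun i j hij hj =>
      ((hζr i (by omega)).trans_le (hle j (i + 1) (by omega) (by omega))).trans (hζl j hj)
    intro i hi j hj hij
    have hi := Finset.mem_range.1 (Finset.mem_coe.1 hi)
    have hj := Finset.mem_range.1 (Finset.mem_coe.1 hj)
    rcases lt_trichotomy i j with h | h | h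
    · exact absurd hij (hmono i j h hj).ne
    · exact h
    · exact absurd hij (hmono j i h hi).ne'
  have hZf : Z.Finite := (Finset.finite_toSet _).image _
  have hZp : ∀ z ∈ Z, 0 < z ∧ z < R ∧ v z t = 0 := by
    rintro z ⟨j, hj, rfl⟩
    have hj := Finset.mem_range.1 (Finset.mem_coe.1 hj)
    exact ⟨(hxpos j (by omega)).trans (hζl j hj), (hζr j hj).trans_le (hxI (j + 1) (by omega)).2,
      (hζ1 j hj).2⟩
  have hall : ∀ r, 0 < r → r < R → v r t = 0 → r ∈ Z := by
    intro r hr hr2 hz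
    have h1 : x 0 < r := by
      by_contra h
      exact zL r hr (not_lt.1 h) hz
    have h2 : r < x K := by
      by_contra h
      exact zR r (not_lt.1 h) hr2 hz
    obtain ⟨j, hj, hj1, hj2⟩ := zn_loc K x r h1.le h2.le (h1.trans h2)
    exact ⟨j, by simpa using hj, (hζ2 j hj r ⟨hj1, hj2⟩ hz).symm⟩
  have h0Z : (0:ℝ) ∉ Z := fun h => lt_irrefl _ (hZp 0 h).1
  constructor
  · intro hvR
    have hset : {r ∈ Icc (0:ℝ) R | v r t = 0} = insert R (insert 0 Z) := by
      ext r
      simp only [mem_sep_iff, mem_insert_iff]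
      constructor
      · rintro ⟨hr, hz⟩
        rcases hr.2.eq_or_lt with h | h
        · exact Or.inl h
        rcases hr.1.eq_or_lt with h' | h'
        · exact Or.inr (Or.inl h'.symm)
        · exact Or.inr (Or.inr (hall r h' h hz))
      · rintro (h | h | h)
        · rw [h]; exact ⟨⟨hR.le, le_rfl⟩, hvR⟩
        · rw [h]; exact ⟨⟨le_rfl, hR.le⟩, h0 t htt⟩
        · have := hZp r h
          exact ⟨⟨this.1.le, this.2.1.le⟩, this.2.2⟩
    rw [hset, ncard_insert_of_notMem _ (hZf.insert 0), ncard_insert_of_notMem h0Z hZf, hZc]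
    rintro (h | h)
    · exact hR.ne' h
    · exact lt_irrefl _ (hZp R h).2.1
  · intro hvR
    have hset : {r ∈ Icc (0:ℝ) R | v r t = 0} = insert 0 Z := by
      ext r
      simp only [mem_sep_iff, mem_insert_iff]
      constructor
      · rintro ⟨hr, hz⟩
        rcases hr.2.eq_or_lt with h | h
        · exact absurd (h ▸ hz) hvR
        rcases hr.1.eq_or_lt with h' | h'
        · exact Or.inl h'.symm
        · exact Or.inr (hall r h' h hz)
      · rintro (h | h)
        · rw [h]; exact ⟨⟨le_rfl, hR.le⟩, h0 t htt⟩
        · have := hZp r h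
          exact ⟨⟨this.1.le, this.2.1.le⟩, this.2.2⟩
    rw [hset, ncard_insert_of_notMem h0Z hZf, hZc]

theorem zn_inf (v : ℝ → ℝ → ℝ) (R t : ℝ)
    (hc : ContinuousOn (fun y => v y t) (Icc 0 R))
    (h : ∀ K : ℕ, ∃ σ : ℝ, (σ = 1 ∨ σ = -1) ∧ ∃ x, ZNAltC v R K σ t x) :
    {r ∈ Icc (0:ℝ) R | v r t = 0}.ncard = 0 := by
  apply Set.Infinite.ncard
  intro hfin
  set N := {r ∈ Icc (0:ℝ) R | v r t = 0}.ncard with hN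
  obtain ⟨σ, hσ, x, hx⟩ := h (N + 2)
  have hσ0 : σ ≠ 0 := by rcases hσ with h | h <;> rw [h] <;> norm_num
  have hw : ∀ n : ℕ, σ * (-1) ^ n ≠ 0 := fun n => mul_ne_zero hσ0 (pow_ne_zero _ (by norm_num))
  have hle := zn_chain_le (N + 2) x (fun j hj => (hx.2 j hj).le)
  have hz : ∀ j < N + 1, ∃ z, x j < z ∧ z < x (j + 1) ∧ v z t = 0 := by
    intro j hj
    have h1 := hx.1 j (by omega)
    have h2 := hx.1 (j + 1) (by omega)
    have h3 := hx.2 j (by omega)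
    have h22 := h2.2
    simp only [pow_succ] at h22
    obtain ⟨z, hz, hz2⟩ := intermediate_value_Ioo' h3.le
      ((continuousOn_const (c := σ * (-1) ^ j)).mul (hc.mono (Icc_subset_Icc h1.1.1 h2.1.2)))
      (show (0:ℝ) ∈ Ioo _ _ from ⟨by simp only [Pi.mul_apply]; linarith, h1.2⟩)
    exact ⟨z, hz.1, hz.2, (mul_eq_zero.1 hz2).resolve_left (hw j)⟩
  choose! ζ hζl hζr hζz using hz
  have hmono : ∀ i j, i < j → j < N + 1 → ζ i < ζ j := fun i j hij hj =>
    ((hζr i (by omega)).trans_le (hle j (i + 1) (by omega) (by omega))).trans (hζl j hj)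
  have hsub : ζ '' (↑(Finset.range (N + 1))) ⊆ {r ∈ Icc (0:ℝ) R | v r t = 0} := by
    rintro z ⟨j, hj, rfl⟩
    have hj := Finset.mem_range.1 (Finset.mem_coe.1 hj)
    exact ⟨⟨(hx.1 j (by omega)).1.1.trans (hζl j hj).le,
      (hζr j hj).le.trans (hx.1 (j + 1) (by omega)).1.2⟩, hζz j hj⟩
  have := ncard_le_ncard hsub hfin
  rw [InjOn.ncard_image, ncard_coe_finset, Finset.card_range, ← hN] at this
  · omega
  intro i hi j hj hij
  have hi := Finset.mem_range.1 (Finset.mem_coe.1 hi)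
  have hj := Finset.mem_range.1 (Finset.mem_coe.1 hj)
  rcases lt_trichotomy i j with h | h | h
  · exact absurd hij (hmono i j h hj).ne
  · exact h
  · exact absurd hij (hmono j i h hi).ne'


theorem zero_number_constant_before
    (m : ℕ) (hm : 2 ≤ m) (R t1 t2 : ℝ) (hR : 0 < R) (ht12 : t1 < t2)
    (b v : ℝ → ℝ → ℝ)
    (hb_smooth : ContDiffOn ℝ (⊤ : ℕ∞) (fun p : ℝ × ℝ => b p.1 p.2) (Icc 0 R ×ˢ Ioo t1 t2))
    (hb_bdd : ∃ C : ℝ, ∀ r ∈ Icc (0:ℝ) R, ∀ t ∈ Ioo t1 t2, |b r t| ≤ C)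
    (hb_deriv_bdd : ∃ C : ℝ, ∀ r ∈ Icc (0:ℝ) R, ∀ t ∈ Ioo t1 t2,
      |deriv (fun x => b x t) r| ≤ C ∧ |deriv (fun s => b r s) t| ≤ C)
    (hb0 : ∀ t ∈ Ioo t1 t2, b 0 t = (m : ℝ) - 1)
    (hbr0 : ∀ t ∈ Ioo t1 t2, deriv (fun x => b x t) 0 = 0)
    (hv_smooth : ContDiffOn ℝ (⊤ : ℕ∞) (fun p : ℝ × ℝ => v p.1 p.2) (Icc 0 R ×ˢ Ioo t1 t2))
    (hpde : ∀ r ∈ Ioo (0:ℝ) R, ∀ t ∈ Ioo t1 t2,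
      deriv (fun s => v r s) t =
        deriv (deriv (fun x => v x t)) r + (((m : ℝ) - 1) / r) * deriv (fun x => v x t) r
          - (b r t / r ^ 2) * v r t)
    (hbc0 : (∀ t ∈ Ioo t1 t2, v 0 t = 0) ∨ (∀ t ∈ Ioo t1 t2, v 0 t ≠ 0))
    (hbcR : (∀ t ∈ Ioo t1 t2, v R t = 0) ∨ (∀ t ∈ Ioo t1 t2, v R t ≠ 0))
    (hnz : ¬ ∀ r ∈ Icc (0:ℝ) R, ∀ t ∈ Ioo t1 t2, v r t = 0)
    :
    ∀ t0 ∈ Ioo t1 t2, ∃ ε0 : ℝ, 0 < ε0 ∧ t1 < t0 - ε0 ∧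
      ∀ s ∈ Ioo (t0 - ε0) t0, ∀ t ∈ Ioo (t0 - ε0) t0,
        {r ∈ Icc (0:ℝ) R | v r s = 0}.ncard = {r ∈ Icc (0:ℝ) R | v r t = 0}.ncard := by
  intro t0 ht0
  have hm' : (2:ℝ) ≤ m := by exact_mod_cast hm
  have hcont := hv_smooth.continuousOn
  have hsol := zn_pde m R t1 t2 b v hv_smooth hpde
  have h0 := zn_v0 m hm R t1 t2 hR b v hb_smooth hb0 hv_smooth hpde
  obtain ⟨C, hC⟩ := zn_cbd m hm R t1 t2 b hb_smooth hb_bdd hb_deriv_bdd hb0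
  have hmono := zn_alt_mono v _ _ R t1 t2 C hR hcont hsol hC h0 hbcR
  have hsub : ∀ t, t1 < t → t < t0 → t ∈ Ioo t1 t2 := fun t h1 h2 => ⟨h1, h2.trans ht0.2⟩
  by_cases hall : ∀ K : ℕ, ∀ t ∈ Ioo t1 t0, ∃ σ : ℝ, (σ = 1 ∨ σ = -1) ∧ ∃ x, ZNAltC v R K σ t x
  · have hz : ∀ t ∈ Ioo t1 t0, {r ∈ Icc (0:ℝ) R | v r t = 0}.ncard = 0 := fun t ht =>
      zn_inf v R t (hcont.comp (f := fun y : ℝ => (y, t)) (by fun_prop)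
        (fun y hy => ⟨hy, hsub t ht.1 ht.2⟩)) (fun K => hall K t ht)
    have h1 := ht0.1
    refine ⟨(t0 - t1) / 2, by linarith, by linarith, fun s hs t ht => ?_⟩
    rw [hz s ⟨by linarith [hs.1], hs.2⟩, hz t ⟨by linarith [ht.1], ht.2⟩]
  · have hex : ∃ K : ℕ, ¬ ∀ t ∈ Ioo t1 t0, ∃ σ : ℝ, (σ = 1 ∨ σ = -1) ∧
        ∃ x, ZNAltC v R K σ t x := not_forall.1 hall
    classical
    obtain ⟨n, hn, hmin⟩ : ∃ n : ℕ, (¬ ∀ t ∈ Ioo t1 t0, ∃ σ : ℝ, (σ = 1 ∨ σ = -1) ∧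
        ∃ x, ZNAltC v R n σ t x) ∧ ∀ k < n, ∀ t ∈ Ioo t1 t0, ∃ σ : ℝ, (σ = 1 ∨ σ = -1) ∧
        ∃ x, ZNAltC v R k σ t x :=
      ⟨Nat.find hex, Nat.find_spec hex, fun k hk => not_not.1 (Nat.find_min hex hk)⟩
    push Not at hn
    obtain ⟨t', ht', hn⟩ := hn
    have hno : ∀ s ∈ Ioo t' t0, ∀ τ : ℝ, τ = 1 ∨ τ = -1 → ¬ ∃ y, ZNAltC v R n τ s y := by
      intro s hs τ hτ hy
      obtain ⟨y, hy⟩ := hmono n τ t' s hτ ht'.1 hs.1.le (hs.2.trans ht0.2) hy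
      exact hn τ hτ y hy
    refine ⟨t0 - t', by linarith [ht'.2], by linarith [ht'.1], ?_⟩
    rw [sub_sub_cancel]
    rcases n with _ | n
    · exact absurd (zn_mk v R 0 1 t' (fun _ => 0) (fun j hj => absurd hj (by omega))
        (fun j hj => absurd hj (by omega))) (hn 1 (Or.inl rfl) _)
    rcases n with _ | K
    · have hz : ∀ t ∈ Ioo t' t0, {r ∈ Icc (0:ℝ) R | v r t = 0} = Icc 0 R := by
        intro t ht
        ext r
        refine ⟨fun h => h.1, fun h => ⟨h, ?_⟩⟩
        by_contra hne
        rcases lt_or_gt_of_ne hne with hv | hv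
        · refine hno t ht (-1) (Or.inr rfl) ⟨fun _ => r, zn_mk _ _ _ _ _ _ ?_ (fun _ _ => le_rfl)⟩
          intro j hj
          obtain rfl : j = 0 := by omega
          exact ⟨h, by rw [pow_zero]; linarith⟩
        · refine hno t ht 1 (Or.inl rfl) ⟨fun _ => r, zn_mk _ _ _ _ _ _ ?_ (fun _ _ => le_rfl)⟩
          intro j hj
          obtain rfl : j = 0 := by omega
          exact ⟨h, by rw [pow_zero]; linarith⟩
      intro s hs t ht
      rw [hz s hs, hz t ht]
    · obtain ⟨Cb, hCb⟩ := hb_bdd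
      have hcount : ∀ t ∈ Ioo t' t0,
          (v R t = 0 → {r ∈ Icc (0:ℝ) R | v r t = 0}.ncard = K + 2) ∧
          (v R t ≠ 0 → {r ∈ Icc (0:ℝ) R | v r t = 0}.ncard = K + 1) := by
        intro t ht
        obtain ⟨σ, hσ, x, hx⟩ := hmin (K + 1) (by omega) t ⟨ht'.1.trans ht.1, ht.2⟩
        refine zn_count v _ _ R t1 t2 hR hcont hsol ?_ ?_ h0 t' t0 ht'.1.le ht0.2.le K σ t hσ ht x hx
          hno
        · intro p hp
          refine ⟨((m:ℝ) - 1) / p, div_nonneg (by linarith) hp.le, fun y hy _ _ => ?_⟩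
          have hy0 : 0 < y := hp.trans hy.1
          rw [abs_of_nonneg (div_nonneg (by linarith) hy0.le)]
          exact div_le_div_of_nonneg_left (by linarith) hp hy.1.le
        · intro p hp
          refine ⟨|Cb| / p ^ 2, by positivity, fun y hy s hs => ?_⟩
          have hy0 : 0 < y := hp.trans hy.1
          rw [abs_neg, abs_div, abs_of_pos (pow_pos hy0 2)]
          exact div_le_div₀ (abs_nonneg _)
            ((hCb y ⟨hy0.le, hy.2.le⟩ s hs).trans (le_abs_self _)) (by positivity)
            (pow_le_pow_left₀ hp.le hy.1.le 2)
      intro s hs t ht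
      have hs2 := hsub s (ht'.1.trans hs.1) hs.2
      have ht2 := hsub t (ht'.1.trans ht.1) ht.2
      rcases hbcR with h | h
      · rw [(hcount s hs).1 (h s hs2), (hcount t ht).1 (h t ht2)]
      · rw [(hcount s hs).2 (h s hs2), (hcount t ht).2 (h t ht2)]
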